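/- arXiv:1906.04417 — 3 statements merged into one kernel-verified Lean document; each statement's English description precedes it below -/
import Mathlib

section
/- Let f_1, ..., f_n ∈ L^1([0,1]; ℂ). Then there exists h ∈ C^∞([0,1]; S^1) with ‖h‖_{W^{1,1}} ≤ 1 + 2πn such that ∫_0^1 f_j(x) h(x) dx = 0 for all j = 1, ..., n. -/
open MeasureTheory

/-!
The function `h` is a finite Blaschke product restricted to the unit circle. The Schur algorithm
attaches to every nonzero `w : ℂⁿ⁺¹` a Blaschke product of degree at most `n`: starting from a
unimodular constant, multiply repeatedly by `z` and apply a disc automorphism. Each step adds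
exactly `2π` to the total angle, and the angle is increasing, so the derivative has `L¹`-norm at
most `2πn`. The parameters are homogeneous in `w`, hence `w ↦ (∫ f_j h_w)_j` is an odd map from
`ℂⁿ⁺¹ ∖ {0}` to `ℂⁿ`. It is continuous: when the degree drops, the factors that disappear converge
to constants in `L²`, although not pointwise. By the Borsuk–Ulam theorem it has a zero.

Borsuk–Ulam follows from a mod 2 count on a fine subdivision of the boundary of the cross-polytope.
The signs of the coordinates of the odd map are antipodal labellings `s_0, …, s_{d-1}` of the
vertices, and the cup product of their coboundaries evaluates to `1` on a hemisphere. So on some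
small simplex every coordinate changes sign, and there the map is small.
-/

namespace LazarevLieb

section Supported

open Finsupp

variable {α R M : Type*} [Semiring R] [AddCommMonoid M] [Module R M] {S : Set α} {c : α →₀ R}

lemma map_mem_of_mem_supported (f : (α →₀ R) →ₗ[R] M) {T : Submodule R M}
    (h : ∀ a ∈ S, f (single a 1) ∈ T) (hc : c ∈ supported R R S) : f c ∈ T := by
  rw [supported_eq_span_single] at hc
  have hspan : Submodule.span R ((single · 1) '' S) ≤ T.comap f :=
    Submodule.span_le.2 (Set.forall_mem_image.2 h)
  exact hspan hc

lemma map_eq_of_mem_supported {f g : (α →₀ R) →ₗ[R] M}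
    (h : ∀ a ∈ S, f (single a 1) = g (single a 1)) (hc : c ∈ supported R R S) : f c = g c := by
  rw [supported_eq_span_single] at hc
  exact LinearMap.eqOn_span (Set.forall_mem_image.2 h) hc

lemma map_eq_of_map_single_eq {f g : (α →₀ R) →ₗ[R] M}
    (h : ∀ a, f (single a 1) = g (single a 1)) (c : α →₀ R) : f c = g c :=
  LinearMap.congr_fun (lhom_ext' fun a ↦ LinearMap.ext_ring (h a)) c

end Supported

section Chains

open Finsupp

variable {E F : Type*}

/-- Simplicial chains mod 2 with vertices in `E`. A `k`-simplex is an ordered list of `k + 1`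
vertices, repetitions being allowed, and `[]` is the empty simplex of the augmented complex. -/
abbrev Chain (E : Type*) := List E →₀ ZMod 2

/-- The chains all of whose simplices belong to `S`. -/
abbrev chainsOn (S : Set (List E)) : Submodule (ZMod 2) (Chain E) := supported (ZMod 2) (ZMod 2) S

/-- The join of a chain with the vertex `a`, placed first. -/
noncomputable def cone (a : E) : Chain E →ₗ[ZMod 2] Chain E :=
  lmapDomain _ _ (List.cons a)

/-- The sum of the codimension one faces of a simplex. -/
noncomputable def faces : List E → Chain E
  | [] => 0
  | a :: l => single l 1 + cone a (faces l)

/-- The boundary operator of the augmented chain complex mod 2. -/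
noncomputable def boundary : Chain E →ₗ[ZMod 2] Chain E :=
  linearCombination (ZMod 2) faces

/-- The pushforward of chains along a map of the vertices. -/
noncomputable def pushforward (φ : E → F) : Chain E →ₗ[ZMod 2] Chain F :=
  lmapDomain _ _ (List.map φ)

@[simp]
lemma cone_single (a : E) (l : List E) (r : ZMod 2) : cone a (single l r) = single (a :: l) r := by
  simp [cone]

@[simp]
lemma boundary_single (l : List E) : boundary (single l 1) = faces l := by
  simp [boundary]

@[simp]
lemma pushforward_single (φ : E → F) (l : List E) (r : ZMod 2) :
    pushforward φ (single l r) = single (l.map φ) r := by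
  simp [pushforward]

@[simp]
lemma chain_add_self (c : Chain E) : c + c = 0 := by
  ext l
  simp [CharTwo.add_self_eq_zero]

lemma boundary_cone (a : E) (c : Chain E) : boundary (cone a c) = c + cone a (boundary c) :=
  map_eq_of_map_single_eq (f := boundary ∘ₗ cone a) (g := .id + cone a ∘ₗ boundary)
    (fun l ↦ by simp [faces]) c

lemma boundary_faces (l : List E) : boundary (faces l) = 0 := by
  induction l with
  | nil => simp [faces]
  | cons a l ih => simp [faces, boundary_cone, ih]

lemma pushforward_cone (φ : E → F) (a : E) (c : Chain E) :
    pushforward φ (cone a c) = cone (φ a) (pushforward φ c) :=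
  map_eq_of_map_single_eq (f := pushforward φ ∘ₗ cone a) (g := cone (φ a) ∘ₗ pushforward φ)
    (fun l ↦ by simp) c

lemma pushforward_faces (φ : E → F) (l : List E) :
    pushforward φ (faces l) = faces (l.map φ) := by
  induction l with
  | nil => simp [faces]
  | cons a l ih => simp [faces, pushforward_cone, ih]

lemma pushforward_boundary (φ : E → F) (c : Chain E) :
    pushforward φ (boundary c) = boundary (pushforward φ c) :=
  map_eq_of_map_single_eq (f := pushforward φ ∘ₗ boundary) (g := boundary ∘ₗ pushforward φ)
    (fun l ↦ by simp [pushforward_faces]) c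

lemma pushforward_pushforward_of_involutive {φ : E → E} (hφ : φ.Involutive) (c : Chain E) :
    pushforward φ (pushforward φ c) = c :=
  map_eq_of_map_single_eq (f := pushforward φ ∘ₗ pushforward φ) (g := .id)
    (fun l ↦ by simp [hφ.comp_self]) c

lemma cone_mem_chainsOn {S T : Set (List E)} {a : E} (h : ∀ l ∈ S, a :: l ∈ T) {c : Chain E}
    (hc : c ∈ chainsOn S) : cone a c ∈ chainsOn T :=
  map_mem_of_mem_supported _
    (fun l hl ↦ by simpa using single_mem_supported _ _ (h l hl)) hc

lemma faces_mem_chainsOn (l : List E) :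
    faces l ∈ chainsOn {t | t.length + 1 = l.length ∧ t ⊆ l} := by
  induction l with
  | nil => simp [faces]
  | cons a l ih =>
    refine Submodule.add_mem _ (single_mem_supported _ _ ?_) (cone_mem_chainsOn ?_ ih)
    · simp
    · rintro t ⟨hlen, hsub⟩
      exact ⟨by simp [hlen], List.cons_subset_cons a hsub⟩

lemma faces_mem_chainsOn_length {k : ℕ} {l : List E} (hl : l.length = k + 1) :
    faces l ∈ chainsOn {t | t.length = k} :=
  supported_mono (fun t ht ↦ by have := ht.1; simp only [Set.mem_ofPred_eq]; omega)
    (faces_mem_chainsOn l)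

end Chains

section Cochains

open Finsupp

variable {E : Type*} (s : ℕ → E → ZMod 2)

/-- The cup product `δ s_{k-1} ∪ ⋯ ∪ δ s_0` of the coboundaries of the labellings `s i`, as a
function of the `k`-simplex. It is nonzero only if every `s i` with `i < k` takes both values on the
vertices. -/
def cup : List E → ZMod 2
  | [] => 0
  | [_] => 1
  | a :: b :: l => (s l.length a + s l.length b) * cup (b :: l)

/-- The cochain `s_k ∪ δ s_{k-1} ∪ ⋯ ∪ δ s_0` of degree `k`, whose coboundary is the `cup` of
degree `k + 1`. -/
def cupPrimitive : List E → ZMod 2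
  | [] => 0
  | a :: l => s l.length a * cup s (a :: l)

/-- The value of a cochain on a chain. -/
noncomputable abbrev eval (ω : List E → ZMod 2) : Chain E →ₗ[ZMod 2] ZMod 2 :=
  linearCombination (ZMod 2) ω

lemma eval_cupPrimitive_cone (a : E) {k : ℕ} {c : Chain E}
    (hc : c ∈ chainsOn {l | l.length = k}) :
    eval (cupPrimitive s) (cone a c) = s k a * eval (cup s) (cone a c) := by
  refine map_eq_of_mem_supported (f := eval (cupPrimitive s) ∘ₗ cone a)
    (g := s k a • (eval (cup s) ∘ₗ cone a)) ?_ hc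
  rintro l rfl
  simp [cupPrimitive]

lemma eval_cupPrimitive_faces_of_eval_cup_faces {l : List E} {k : ℕ} (hl : l.length = k + 2)
    (h : eval (cup s) (faces l) = 0) : eval (cupPrimitive s) (faces l) = cup s l := by
  match l, hl with
  | a :: b :: l, hl =>
    obtain rfl : l.length = k := by simpa using hl
    have hcone : cup s (b :: l) = eval (cup s) (cone a (faces (b :: l))) := by
      simpa [faces, CharTwo.add_eq_zero] using h
    have hfaces : faces (b :: l) ∈ chainsOn {t | t.length = l.length} :=
      faces_mem_chainsOn_length rfl
    calc eval (cupPrimitive s) (faces (a :: b :: l))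
        = cupPrimitive s (b :: l) + eval (cupPrimitive s) (cone a (faces (b :: l))) := by
          rw [faces, map_add, linearCombination_single, one_smul]
      _ = s l.length b * cup s (b :: l) + s l.length a * cup s (b :: l) := by
          rw [eval_cupPrimitive_cone s a hfaces, ← hcone, cupPrimitive]
      _ = cup s (a :: b :: l) := by rw [cup]; ring

lemma eval_cup_faces {l : List E} {k : ℕ} (hl : l.length = k + 2) :
    eval (cup s) (faces l) = 0 := by
  induction k generalizing l with
  | zero =>
    obtain ⟨a, b, rfl⟩ := List.length_eq_two.1 hl
    simp [faces, cup, CharTwo.add_self_eq_zero]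
  | succ k ih =>
    have hcup : eval (cup s) (faces l) = eval (cupPrimitive s) (boundary (faces l)) := by
      refine map_eq_of_mem_supported (g := eval (cupPrimitive s) ∘ₗ boundary) (fun t ht ↦ ?_)
        (faces_mem_chainsOn_length hl)
      simp [eval_cupPrimitive_faces_of_eval_cup_faces s ht (ih ht)]
    rw [hcup, boundary_faces, map_zero]

lemma eval_cupPrimitive_boundary {k : ℕ} {c : Chain E} (hc : c ∈ chainsOn {l | l.length = k + 2}) :
    eval (cupPrimitive s) (boundary c) = eval (cup s) c := by
  refine map_eq_of_mem_supported (f := eval (cupPrimitive s) ∘ₗ boundary) (fun l hl ↦ ?_) hc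
  simp [eval_cupPrimitive_faces_of_eval_cup_faces s hl (eval_cup_faces s hl)]

lemma exists_ne_of_cup_ne_zero {l : List E} (h : cup s l ≠ 0) {i : ℕ} (hi : i + 1 < l.length) :
    ∃ a ∈ l, ∃ b ∈ l, s i a ≠ s i b := by
  match l with
  | [] | [_] => simp at hi
  | a :: b :: l =>
    rw [cup] at h
    rcases eq_or_ne i l.length with rfl | hne
    · exact ⟨a, by simp, b, by simp, fun hab ↦
        left_ne_zero_of_mul h (by rw [hab, CharTwo.add_self_eq_zero])⟩
    · obtain ⟨x, hx, y, hy, hxy⟩ := exists_ne_of_cup_ne_zero (right_ne_zero_of_mul h) (i := i)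
        (by simp only [List.length_cons] at hi ⊢; omega)
      exact ⟨x, List.mem_cons_of_mem _ hx, y, List.mem_cons_of_mem _ hy, hxy⟩

variable {s} {φ : E → E}

lemma cup_map_of_flip {l : List E} (h : ∀ x ∈ l, ∀ i, s i (φ x) = s i x + 1) :
    cup s (l.map φ) = cup s l := by
  match l with
  | [] | [_] => simp [cup]
  | a :: b :: l =>
    have ih := cup_map_of_flip (l := b :: l) fun x hx ↦ h x (List.mem_cons_of_mem _ hx)
    rw [List.map_cons] at ih
    simp only [List.map_cons, cup, ih, List.length_map, h a (by simp), h b (by simp)]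
    rw [add_add_add_comm, CharTwo.add_self_eq_zero, add_zero]

lemma eval_cupPrimitive_add_pushforward {c : Chain E}
    (hc : c ∈ chainsOn {l | ∀ x ∈ l, ∀ i, s i (φ x) = s i x + 1}) :
    eval (cupPrimitive s) (c + pushforward φ c) = eval (cup s) c := by
  refine map_eq_of_mem_supported
    (f := eval (cupPrimitive s) ∘ₗ (.id + pushforward φ)) (fun l hl ↦ ?_) hc
  cases l with
  | nil => simp [cup]
  | cons a l =>
    have hcup := cup_map_of_flip hl
    rw [List.map_cons] at hcup
    simp only [LinearMap.comp_apply, LinearMap.add_apply, LinearMap.id_apply, map_add,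
      pushforward_single, linearCombination_single, one_smul, List.map_cons, cupPrimitive, hcup,
      List.length_map, hl a (by simp)]
    rw [add_one_mul, ← add_assoc, CharTwo.add_self_eq_zero, zero_add]

-- This is the mod 2 degree argument behind Borsuk–Ulam: the `c k` form an antipodally symmetric
-- tower of hemispheres, each bounded by the two copies of the previous one.
lemma eval_cup_eq_one_of_boundary_eq {c : ℕ → Chain E} {v : E} (h_zero : c 0 = single [v] 1)
    (h_length : ∀ k, c k ∈ chainsOn {l | l.length = k + 1})
    (h_boundary : ∀ k, boundary (c (k + 1)) = c k + pushforward φ (c k)) {d : ℕ}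
    (h_flip : ∀ k < d, c k ∈ chainsOn {l | ∀ x ∈ l, ∀ i, s i (φ x) = s i x + 1}) :
    eval (cup s) (c d) = 1 := by
  induction d with
  | zero => simp [h_zero, cup]
  | succ d ih =>
    rw [← eval_cupPrimitive_boundary s (h_length (d + 1)), h_boundary,
      eval_cupPrimitive_add_pushforward (h_flip d d.lt_succ_self),
      ih fun k hk ↦ h_flip k (hk.trans d.lt_succ_self)]

end Cochains

section Subdivision

open Finsupp

variable {E : Type*} [AddCommGroup E] [Module ℝ E]

/-- The barycenter of a simplex; the junk value at `[]` is `0`. -/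
noncomputable def barycenter (l : List E) : E := (l.length : ℝ)⁻¹ • l.sum

/-- Barycentric subdivision of the simplices with `k` vertices: the barycenter of a simplex is
joined to the subdivision of its boundary. -/
noncomputable def subdivide : ℕ → Chain E →ₗ[ZMod 2] Chain E
  | 0 => .id
  | k + 1 => linearCombination (ZMod 2) fun l ↦ cone (barycenter l) (subdivide k (faces l))

lemma subdivide_succ_single (k : ℕ) (l : List E) :
    subdivide (k + 1) (single l 1) = cone (barycenter l) (subdivide k (faces l)) := by
  simp [subdivide]

lemma subdivide_mem_chainsOn_length {k : ℕ} {c : Chain E} (hc : c ∈ chainsOn {l | l.length = k}) :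
    subdivide k c ∈ chainsOn {l | l.length = k} := by
  induction k generalizing c with
  | zero => exact hc
  | succ k ih =>
    refine map_mem_of_mem_supported _ (fun l hl ↦ ?_) hc
    rw [subdivide_succ_single]
    exact cone_mem_chainsOn (by simp) (ih (faces_mem_chainsOn_length hl))

lemma iterate_subdivide_mem_chainsOn_length {k : ℕ} {c : Chain E}
    (hc : c ∈ chainsOn {l | l.length = k}) (m : ℕ) :
    (subdivide k)^[m] c ∈ chainsOn {l | l.length = k} := by
  induction m with
  | zero => exact hc
  | succ m ih =>
    rw [Function.iterate_succ_apply']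
    exact subdivide_mem_chainsOn_length ih

lemma boundary_subdivide {k : ℕ} {c : Chain E} (hc : c ∈ chainsOn {l | l.length = k + 1}) :
    boundary (subdivide (k + 1) c) = subdivide k (boundary c) := by
  have of_single (k : ℕ) (h : ∀ l : List E, l.length = k + 1 →
      boundary (subdivide (k + 1) (single l 1)) = subdivide k (faces l)) {c : Chain E}
      (hc : c ∈ chainsOn {l | l.length = k + 1}) :
      boundary (subdivide (k + 1) c) = subdivide k (boundary c) :=
    map_eq_of_mem_supported (f := boundary ∘ₗ subdivide (E := E) (k + 1))
      (g := subdivide (E := E) k ∘ₗ boundary) (fun l hl ↦ by simpa using h l hl) hc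
  induction k generalizing c with
  | zero =>
    refine of_single 0 (fun l hl ↦ ?_) hc
    obtain ⟨a, rfl⟩ := List.length_eq_one_iff.1 hl
    simp [subdivide, faces]
  | succ k ih =>
    refine of_single (k + 1) (fun l hl ↦ ?_) hc
    simp [subdivide_succ_single, boundary_cone, ih (faces_mem_chainsOn_length hl), boundary_faces]

lemma boundary_iterate_subdivide {k : ℕ} {c : Chain E}
    (hc : c ∈ chainsOn {l | l.length = k + 1}) (m : ℕ) :
    boundary ((subdivide (k + 1))^[m] c) = (subdivide k)^[m] (boundary c) := by
  induction m with
  | zero => rfl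
  | succ m ih =>
    rw [Function.iterate_succ_apply', Function.iterate_succ_apply', ← ih,
      boundary_subdivide (iterate_subdivide_mem_chainsOn_length hc m)]

lemma barycenter_map_neg (l : List E) : barycenter (l.map Neg.neg) = -barycenter l := by
  simp only [barycenter, List.length_map, ← smul_neg, List.sum_neg]

lemma pushforward_neg_subdivide (k : ℕ) (c : Chain E) :
    pushforward Neg.neg (subdivide k c) = subdivide k (pushforward Neg.neg c) := by
  induction k generalizing c with
  | zero => rfl
  | succ k ih =>
    refine map_eq_of_map_single_eq (f := pushforward (Neg.neg : E → E) ∘ₗ subdivide (k + 1))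
      (g := subdivide (k + 1) ∘ₗ pushforward (Neg.neg : E → E)) (fun l ↦ ?_) c
    simp [subdivide_succ_single, pushforward_cone, ih, pushforward_faces, barycenter_map_neg]

lemma barycenter_eq_sum (l : List E) :
    barycenter l = ∑ i : Fin l.length, (l.length : ℝ)⁻¹ • l[i] := by
  simp [barycenter, ← Finset.smul_sum, Fin.sum_univ_getElem]

lemma barycenter_mem_convexHull {l : List E} (hl : l ≠ []) :
    barycenter l ∈ convexHull ℝ {x | x ∈ l} := by
  have hpos : 0 < l.length := List.length_pos_iff.2 hl
  rw [barycenter_eq_sum]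
  refine (convex_convexHull ℝ _).sum_mem (fun _ _ ↦ by positivity) ?_
    fun i _ ↦ subset_convexHull ℝ _ (List.getElem_mem i.2)
  simp [hpos.ne']

end Subdivision

section FineSimplices

open Finsupp

variable {E : Type*} [NormedAddCommGroup E] [NormedSpace ℝ E]

lemma dist_barycenter_le {l : List E} {δ : ℝ} (h : ∀ x ∈ l, ∀ y ∈ l, dist x y ≤ δ)
    {v : E} (hv : v ∈ l) : dist v (barycenter l) ≤ (1 - (l.length : ℝ)⁻¹) * δ := by
  obtain ⟨j, rfl⟩ := List.get_of_mem hv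
  have hlength : (l.length : ℝ) ≠ 0 := by exact_mod_cast j.pos.ne'
  have hcard : ((Finset.univ.erase j).card : ℝ) = l.length - 1 := by
    rw [Finset.card_erase_of_mem (Finset.mem_univ j), Finset.card_univ, Fintype.card_fin,
      Nat.cast_pred j.pos]
  calc dist (l.get j) (barycenter l)
      = ‖∑ i : Fin l.length, (l.length : ℝ)⁻¹ • (l.get j - l.get i)‖ := by
        simp [dist_eq_norm, barycenter_eq_sum, smul_sub, ← Nat.cast_smul_eq_nsmul ℝ, smul_smul,
          hlength]
    _ ≤ ∑ i : Fin l.length, (l.length : ℝ)⁻¹ * dist (l.get j) (l.get i) :=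
        norm_sum_le_of_le _ fun _ _ ↦ by simp [norm_smul, dist_eq_norm]
    _ = ∑ i ∈ Finset.univ.erase j, (l.length : ℝ)⁻¹ * dist (l.get j) (l.get i) :=
        (Finset.sum_erase _ (by simp)).symm
    _ ≤ ∑ _i ∈ Finset.univ.erase j, (l.length : ℝ)⁻¹ * δ := by
        gcongr
        exact h _ hv _ (List.get_mem ..)
    _ = (1 - (l.length : ℝ)⁻¹) * δ := by
        rw [Finset.sum_const, nsmul_eq_mul, hcard]
        field_simp

/-- The simplices with `k` vertices that lie in `K` and whose edges have length at most `δ`. -/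
def fineSimplices (k : ℕ) (K : Set E) (δ : ℝ) : Set (List E) :=
  {l | l.length = k ∧ convexHull ℝ {x | x ∈ l} ⊆ K ∧ ∀ x ∈ l, ∀ y ∈ l, dist x y ≤ δ}

lemma mem_of_mem_fineSimplices {k : ℕ} {K : Set E} {δ : ℝ} {l : List E}
    (hl : l ∈ fineSimplices k K δ) {x : E} (hx : x ∈ l) : x ∈ K :=
  hl.2.1 (subset_convexHull ℝ _ hx)

lemma cons_mem_fineSimplices {k : ℕ} {K C : Set E} {δ : ℝ} {b : E} {l : List E}
    (hC : Convex ℝ C) (hCK : C ⊆ K) (hb : b ∈ C) (hδ : 0 ≤ δ)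
    (hl : l ∈ fineSimplices k (C ∩ Metric.closedBall b δ) δ) :
    b :: l ∈ fineSimplices (k + 1) K δ := by
  refine ⟨by simp [hl.1], (convexHull_min ?_ hC).trans hCK, ?_⟩
  · exact List.forall_mem_cons (p := (· ∈ C)).2
      ⟨hb, fun x hx ↦ (mem_of_mem_fineSimplices hl hx).1⟩
  · have hbl : ∀ x ∈ l, dist x b ≤ δ := fun x hx ↦ (mem_of_mem_fineSimplices hl hx).2
    simp only [List.forall_mem_cons, dist_self]
    exact ⟨⟨hδ, fun y hy ↦ dist_comm y b ▸ hbl y hy⟩, fun x hx ↦ ⟨hbl x hx, hl.2.2 x hx⟩⟩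

lemma subdivide_single_mem_chainsOn_fineSimplices {k : ℕ} {K : Set E} {δ r : ℝ} {l : List E}
    (hr : (1 - r) * k ≤ 1) (hl : l ∈ fineSimplices k K δ) :
    subdivide k (single l 1) ∈ chainsOn (fineSimplices k K (r * δ)) := by
  obtain ⟨hlength, hK, hdist⟩ := hl
  induction k generalizing K l with
  | zero =>
    obtain rfl := List.length_eq_zero_iff.1 hlength
    exact single_mem_supported _ _ ⟨rfl, hK, by simp⟩
  | succ k ih =>
    set b := barycenter l
    have hl : l ≠ [] := List.ne_nil_of_length_eq_add_one hlength
    have hb : b ∈ convexHull ℝ {x | x ∈ l} := barycenter_mem_convexHull hl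
    have hδ : 0 ≤ δ := dist_nonneg.trans (hdist _ (l.head_mem hl) _ (l.head_mem hl))
    have hk : 1 - ((k + 1 : ℕ) : ℝ)⁻¹ ≤ r := by
      rw [sub_le_comm, ← one_div, le_div_iff₀ (by positivity)]
      exact hr
    have hr_nonneg : 0 ≤ r := le_trans (sub_nonneg.2 <| Nat.cast_inv_le_one _) hk
    have hball : ∀ x ∈ l, x ∈ Metric.closedBall b (r * δ) := fun x hx ↦ by
      refine (dist_barycenter_le hdist hx).trans ?_
      rw [hlength]
      gcongr
    have hfaces : subdivide k (faces l) ∈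
        chainsOn (fineSimplices k (convexHull ℝ {x | x ∈ l} ∩ Metric.closedBall b (r * δ))
          (r * δ)) := by
      refine map_mem_of_mem_supported _ (fun t ht ↦ ?_) (faces_mem_chainsOn l)
      refine ih ?_ (by have := ht.1; omega) (Set.subset_inter (convexHull_mono ht.2) ?_)
        fun x hx y hy ↦ hdist x (ht.2 hx) y (ht.2 hy)
      · push_cast at hr
        nlinarith
      · exact convexHull_min (fun x hx ↦ hball x (ht.2 hx)) (convex_closedBall _ _)
    rw [subdivide_succ_single]
    exact cone_mem_chainsOn (fun t ↦
      cons_mem_fineSimplices (convex_convexHull ℝ _) hK hb (by positivity)) hfaces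

lemma subdivide_mem_chainsOn_fineSimplices {k : ℕ} {K : Set E} {δ r : ℝ} {c : Chain E}
    (hr : (1 - r) * k ≤ 1) (hc : c ∈ chainsOn (fineSimplices k K δ)) :
    subdivide k c ∈ chainsOn (fineSimplices k K (r * δ)) :=
  map_mem_of_mem_supported _ (fun _ ↦ subdivide_single_mem_chainsOn_fineSimplices hr) hc

lemma iterate_subdivide_mem_chainsOn_fineSimplices {k : ℕ} {K : Set E} {δ r : ℝ} {c : Chain E}
    (hr : (1 - r) * k ≤ 1) (hc : c ∈ chainsOn (fineSimplices k K δ)) (m : ℕ) :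
    (subdivide k)^[m] c ∈ chainsOn (fineSimplices k K (r ^ m * δ)) := by
  induction m with
  | zero => simpa using hc
  | succ m ih =>
    rw [Function.iterate_succ_apply', pow_succ', mul_assoc]
    exact subdivide_mem_chainsOn_fineSimplices hr ih

end FineSimplices

section CrossChain

open Finsupp

variable {E : Type*} [AddCommGroup E]

/-- A triangulated hemisphere in the boundary of the cross-polytope with vertices
`± e 0, …, ± e k`: the join of `e k` with the boundary of the cross-polytope of dimension one
lower. -/
noncomputable def crossChain (e : ℕ → E) : ℕ → Chain E
  | 0 => single [e 0] 1
  | k + 1 => cone (e (k + 1)) (crossChain e k + pushforward Neg.neg (crossChain e k))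

lemma boundary_crossChain (e : ℕ → E) (k : ℕ) :
    boundary (crossChain e (k + 1)) = crossChain e k + pushforward Neg.neg (crossChain e k) := by
  suffices h : boundary (crossChain e k + pushforward Neg.neg (crossChain e k)) = 0 by
    rw [crossChain, boundary_cone, h, map_zero, add_zero]
  cases k with
  | zero => simp [crossChain, faces]
  | succ k =>
    rw [map_add, ← pushforward_boundary, boundary_crossChain, map_add,
      pushforward_pushforward_of_involutive neg_involutive, add_comm (pushforward _ _),
      chain_add_self]

lemma crossChain_mem_chainsOn (e : ℕ → E) (k : ℕ) :
    crossChain e k ∈ chainsOn {l | l.length = k + 1 ∧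
      ∃ σ : ℕ → ℤˣ, ∀ x ∈ l, ∃ i ≤ k, σ i • e i = x} := by
  induction k with
  | zero => exact single_mem_supported _ _ ⟨rfl, 1, by simp⟩
  | succ k ih =>
    refine cone_mem_chainsOn ?_ (Submodule.add_mem _ ih (map_mem_of_mem_supported _ ?_ ih))
    · rintro l ⟨hl, σ, hσ⟩
      refine ⟨by simp [hl], Function.update σ (k + 1) 1, List.forall_mem_cons.2
        ⟨⟨k + 1, le_rfl, by simp⟩, fun x hx ↦ ?_⟩⟩
      obtain ⟨i, hi, rfl⟩ := hσ x hx
      exact ⟨i, hi.trans k.le_succ, by simp [(Nat.lt_succ_of_le hi).ne]⟩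
    · rintro l ⟨hl, σ, hσ⟩
      rw [pushforward_single]
      refine single_mem_supported _ _ ⟨by simpa using hl, -σ, List.forall_mem_map.2 fun x hx ↦ ?_⟩
      obtain ⟨i, hi, rfl⟩ := hσ x hx
      exact ⟨i, hi, by simp⟩

lemma crossChain_mem_chainsOn_length (e : ℕ → E) (k : ℕ) :
    crossChain e k ∈ chainsOn {l | l.length = k + 1} :=
  supported_mono (fun _ hl ↦ hl.1) (crossChain_mem_chainsOn e k)

end CrossChain

section CrossPolytope

open Finsupp

variable {E : Type*} [NormedAddCommGroup E] [NormedSpace ℝ E]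

/-- The boundary of the cross-polytope with vertices `± e 0, …, ± e d`. -/
def crossPolytope (e : ℕ → E) (d : ℕ) : Set E :=
  ⋃ σ : Set.Iic d → ℤˣ, convexHull ℝ (Set.range fun i ↦ σ i • e i)

lemma isCompact_crossPolytope (e : ℕ → E) (d : ℕ) : IsCompact (crossPolytope e d) :=
  isCompact_iUnion fun _ ↦ (Set.finite_range _).isCompact_convexHull ℝ

lemma zero_notMem_crossPolytope {e : ℕ → E} {d : ℕ} (he : LinearIndepOn ℝ e (Set.Iic d)) :
    0 ∉ crossPolytope e d := by
  intro h
  obtain ⟨σ, hσ⟩ := Set.mem_iUnion.1 h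
  obtain ⟨f, hf⟩ := LinearMap.exists_extend ((Module.Basis.span he).constr ℝ fun i ↦ (σ i : ℝ))
  have hfe (i : Set.Iic d) : f (e i) = σ i := by
    have hspan : (Module.Basis.span he i : E) = e i := congrArg _ (Module.Basis.span_apply he i)
    simpa [hspan] using LinearMap.congr_fun hf (Module.Basis.span he i)
  have hfσ (i : Set.Iic d) : f (σ i • e i) = 1 := by
    rw [Units.smul_def, map_zsmul, hfe, zsmul_eq_mul, ← Int.cast_mul, Int.units_coe_mul_self,
      Int.cast_one]
  have hsub : convexHull ℝ (Set.range fun i ↦ σ i • e i) ⊆ {x | f x = 1} :=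
    convexHull_min (Set.range_subset_iff.2 hfσ) (convex_hyperplane f.isLinear 1)
  simpa using hsub hσ

lemma crossChain_mem_chainsOn_fineSimplices (e : ℕ → E) {k d : ℕ} (hk : k ≤ d) :
    crossChain e k ∈ chainsOn (fineSimplices (k + 1) (crossPolytope e d)
      (Metric.diam (crossPolytope e d))) := by
  refine supported_mono ?_ (crossChain_mem_chainsOn e k)
  rintro l ⟨hl, σ, hσ⟩
  have hK : convexHull ℝ {x | x ∈ l} ⊆ crossPolytope e d := by
    refine Set.subset_iUnion_of_subset (fun i ↦ σ i) (convexHull_mono fun x hx ↦ ?_)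
    obtain ⟨i, hi, rfl⟩ := hσ x hx
    exact ⟨⟨i, hi.trans hk⟩, rfl⟩
  have hmem : ∀ x ∈ l, x ∈ crossPolytope e d := fun x hx ↦ hK (subset_convexHull ℝ _ hx)
  exact ⟨hl, hK, fun x hx y hy ↦
    Metric.dist_le_diam_of_mem (isCompact_crossPolytope e d).isBounded (hmem x hx) (hmem y hy)⟩

lemma iterate_subdivide_crossChain_zero (e : ℕ → E) (m : ℕ) :
    (subdivide 1)^[m] (crossChain e 0) = single [e 0] 1 :=
  Function.iterate_fixed (by simp [crossChain, subdivide, faces, barycenter]) m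

lemma boundary_iterate_subdivide_crossChain (e : ℕ → E) (m k : ℕ) :
    boundary ((subdivide (k + 2))^[m] (crossChain e (k + 1))) =
      (subdivide (k + 1))^[m] (crossChain e k) +
        pushforward Neg.neg ((subdivide (k + 1))^[m] (crossChain e k)) := by
  rw [boundary_iterate_subdivide (crossChain_mem_chainsOn_length e (k + 1)), boundary_crossChain,
    iterate_map_add, Function.Semiconj.iterate_right (pushforward_neg_subdivide (k + 1)) m]

lemma exists_iterate_subdivide_crossChain_mem_fineSimplices (e : ℕ → E) (d : ℕ) {ε : ℝ}
    (hε : 0 < ε) :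
    ∃ m : ℕ, ∀ k ≤ d, (subdivide (k + 1))^[m] (crossChain e k) ∈
      chainsOn (fineSimplices (k + 1) (crossPolytope e d) ε) := by
  set r : ℝ := 1 - (d + 1 : ℝ)⁻¹ with hr
  have hr_nonneg : 0 ≤ r := sub_nonneg.2 (inv_le_one_of_one_le₀ (by simp))
  have hr_lt_one : r < 1 := sub_lt_self 1 (by positivity)
  obtain ⟨m, hm⟩ : ∃ m : ℕ, r ^ m * Metric.diam (crossPolytope e d) < ε := by
    have hlim := (tendsto_pow_atTop_nhds_zero_of_lt_one hr_nonneg hr_lt_one).mul_const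
      (Metric.diam (crossPolytope e d))
    rw [zero_mul] at hlim
    exact (hlim.eventually_lt_const hε).exists
  refine ⟨m, fun k hk ↦ ?_⟩
  have hrk : (1 - r) * (k + 1 : ℕ) ≤ 1 := by
    rw [hr, sub_sub_cancel, inv_mul_le_one₀ (by positivity)]
    exact_mod_cast Nat.succ_le_succ hk
  refine supported_mono ?_ (iterate_subdivide_mem_chainsOn_fineSimplices hrk
    (crossChain_mem_chainsOn_fineSimplices e hk) m)
  exact fun l hl ↦ ⟨hl.1, hl.2.1, fun x hx y hy ↦ (hl.2.2 x hx y hy).trans hm.le⟩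

-- A form of Tucker's lemma.
lemma exists_fine_simplex_forall_exists_ne {e : ℕ → E} {d : ℕ}
    (he : LinearIndepOn ℝ e (Set.Iic d)) {s : ℕ → E → ZMod 2}
    (hs : ∀ i x, x ≠ 0 → s i (-x) = s i x + 1) {ε : ℝ} (hε : 0 < ε) :
    ∃ l ∈ fineSimplices (d + 1) (crossPolytope e d) ε,
      ∀ i < d, ∃ a ∈ l, ∃ b ∈ l, s i a ≠ s i b := by
  obtain ⟨m, hfine⟩ := exists_iterate_subdivide_crossChain_mem_fineSimplices e d hε
  have hone : eval (cup s) ((subdivide (d + 1))^[m] (crossChain e d)) = 1 := by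
    refine eval_cup_eq_one_of_boundary_eq (φ := Neg.neg)
      (c := fun k ↦ (subdivide (k + 1))^[m] (crossChain e k))
      (iterate_subdivide_crossChain_zero e m)
      (fun k ↦ iterate_subdivide_mem_chainsOn_length (crossChain_mem_chainsOn_length e k) m)
      (boundary_iterate_subdivide_crossChain e m) fun k hk ↦ supported_mono ?_ (hfine k hk.le)
    exact fun l hl x hx i ↦ hs i x <|
      ne_of_mem_of_not_mem (mem_of_mem_fineSimplices hl hx) (zero_notMem_crossPolytope he)
  by_contra! hcon
  have hzero : eval (cup s) ((subdivide (d + 1))^[m] (crossChain e d)) = 0 := by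
    refine map_eq_of_mem_supported (g := 0) (fun l hl ↦ ?_) (hfine d le_rfl)
    obtain ⟨i, hi, hconst⟩ := hcon l hl
    rw [linearCombination_single, one_smul, LinearMap.zero_apply]
    by_contra hne
    obtain ⟨a, ha, b, hb, hab⟩ :=
      exists_ne_of_cup_ne_zero s hne (hl.1 ▸ Nat.succ_lt_succ hi : i + 1 < l.length)
    exact hab (hconst a ha b hb)
  exact one_ne_zero (hone.symm.trans hzero)

end CrossPolytope

section BorsukUlam

open scoped Classical in
lemma exists_odd_zmod_two_labelling (E : Type*) [AddCommGroup E] [IsAddTorsionFree E] :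
    ∃ t : E → ZMod 2, ∀ x ≠ 0, t (-x) = t x + 1 := by
  refine ⟨fun x ↦ if WellOrderingRel x (-x) then 1 else 0, fun x hx ↦ ?_⟩
  have hne : x ≠ -x := self_ne_neg.2 hx
  rcases trichotomous_of WellOrderingRel x (-x) with h | h | h
  · simp [h, asymm_of WellOrderingRel h, CharTwo.add_self_eq_zero]
  · exact absurd h hne
  · simp [h, asymm_of WellOrderingRel h]

lemma exists_sign_labelling {E : Type*} [AddCommGroup E] [IsAddTorsionFree E] {g : E → ℝ}
    (hg : ∀ x, g (-x) = -g x) :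
    ∃ s : E → ZMod 2, (∀ x ≠ 0, s (-x) = s x + 1) ∧ ∀ x y, s x ≠ s y → g x * g y ≤ 0 := by
  obtain ⟨t, ht⟩ := exists_odd_zmod_two_labelling E
  refine ⟨fun x ↦ if 0 < g x then 1 else if g x < 0 then 0 else t x, fun x hx ↦ ?_, fun x y h ↦ ?_⟩
  · rcases lt_trichotomy (g x) 0 with h | h | h
    · simp [hg, h, h.not_gt]
    · simp [hg, h, ht x hx]
    · simp [hg, h, h.not_gt, CharTwo.add_self_eq_zero]
  · contrapose! h
    rcases mul_pos_iff.1 h with ⟨hx, hy⟩ | ⟨hx, hy⟩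
    · simp [hx, hy]
    · simp [hx, hy, hx.not_gt, hy.not_gt]

lemma abs_le_of_mul_nonpos {x a b r : ℝ} (hab : a * b ≤ 0) (ha : |x - a| ≤ r) (hb : |x - b| ≤ r) :
    |x| ≤ r := by
  rw [abs_le] at *
  rcases mul_nonpos_iff.1 hab with h | h <;> constructor <;> linarith

variable {E : Type*} [NormedAddCommGroup E] [NormedSpace ℝ E]

lemma exists_mem_crossPolytope_norm_lt {e : ℕ → E} {d : ℕ} (he : LinearIndepOn ℝ e (Set.Iic d))
    {g : E → Fin d → ℝ} (hodd : ∀ x, g (-x) = -g x)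
    (hcont : ContinuousOn g (crossPolytope e d)) {ε : ℝ} (hε : 0 < ε) :
    ∃ x ∈ crossPolytope e d, ‖g x‖ < ε := by
  have : IsAddTorsionFree E := .of_isTorsionFree ℝ E
  have hsign (i : ℕ) : ∃ s : E → ZMod 2, (∀ x ≠ 0, s (-x) = s x + 1) ∧
      ∀ hi : i < d, ∀ x y, s x ≠ s y → g x ⟨i, hi⟩ * g y ⟨i, hi⟩ ≤ 0 := by
    by_cases hi : i < d
    · obtain ⟨s, hs, hsg⟩ := exists_sign_labelling (g := fun x ↦ g x ⟨i, hi⟩) fun x ↦ by simp [hodd]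
      exact ⟨s, hs, fun _ ↦ hsg⟩
    · obtain ⟨s, hs⟩ := exists_odd_zmod_two_labelling E
      exact ⟨s, hs, fun h ↦ absurd h hi⟩
  choose s hs hsg using hsign
  have hunif := (isCompact_crossPolytope e d).uniformContinuousOn_of_continuous hcont
  obtain ⟨δ, hδ, hgδ⟩ := Metric.uniformContinuousOn_iff_le.1 hunif (ε / 2) (half_pos hε)
  obtain ⟨l, hl, hlabels⟩ := exists_fine_simplex_forall_exists_ne he hs hδ
  have hmem : ∀ x ∈ l, x ∈ crossPolytope e d := fun x ↦ mem_of_mem_fineSimplices hl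
  have hne : l ≠ [] := List.ne_nil_of_length_eq_add_one hl.1
  have hhead (i : Fin d) : ∀ a ∈ l, |g (l.head hne) i - g a i| ≤ ε / 2 := fun a ha ↦
    (norm_le_pi_norm _ i).trans <| dist_eq_norm (g (l.head hne)) (g a) ▸
      hgδ _ (hmem _ (l.head_mem hne)) _ (hmem a ha) (hl.2.2 _ (l.head_mem hne) a ha)
  refine ⟨l.head hne, hmem _ (l.head_mem hne), (pi_norm_lt_iff hε).2 fun i ↦ ?_⟩
  obtain ⟨a, ha, b, hb, hab⟩ := hlabels i i.2
  exact (abs_le_of_mul_nonpos (hsg i i.2 a b hab) (hhead i a ha) (hhead i b hb)).trans_lt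
    (half_lt_self hε)

open Module in
theorem borsuk_ulam [FiniteDimensional ℝ E] {F : Type*} [NormedAddCommGroup F] [NormedSpace ℝ F]
    [FiniteDimensional ℝ F] (hdim : finrank ℝ F < finrank ℝ E) {g : E → F}
    (hodd : ∀ x, g (-x) = -g x) (hcont : ContinuousOn g {0}ᶜ) : ∃ x ≠ 0, g x = 0 := by
  let b := finBasis ℝ E
  let e (i : ℕ) : E := if hi : i < finrank ℝ E then b ⟨i, hi⟩ else 0
  have he : LinearIndepOn ℝ e (Set.Iic (finrank ℝ F)) := by
    have hlt (i : Set.Iic (finrank ℝ F)) : i < finrank ℝ E := i.2.trans_lt hdim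
    have heb : (fun i : Set.Iic (finrank ℝ F) ↦ e i) =
        b ∘ fun i : Set.Iic (finrank ℝ F) ↦ (⟨i, hlt i⟩ : Fin (finrank ℝ E)) :=
      funext fun i ↦ dif_pos (hlt i)
    rw [LinearIndepOn, heb]
    exact b.linearIndependent.comp _ fun i j hij ↦ Subtype.ext (Fin.mk.inj_iff.1 hij)
  set K := crossPolytope e (finrank ℝ F)
  have hK : K ⊆ {0}ᶜ := Set.subset_compl_singleton_iff.2 (zero_notMem_crossPolytope he)
  let φ : F ≃L[ℝ] (Fin (finrank ℝ F) → ℝ) := (finBasis ℝ F).equivFunL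
  have hφcont : ContinuousOn (fun x ↦ φ (g x)) K := φ.continuous.comp_continuousOn (hcont.mono hK)
  have hsmall {ε : ℝ} (hε : 0 < ε) : ∃ x ∈ K, ‖φ (g x)‖ < ε :=
    exists_mem_crossPolytope_norm_lt he (fun x ↦ by rw [hodd, map_neg]) hφcont hε
  obtain ⟨y, hy, -⟩ := hsmall one_pos
  obtain ⟨x, hx, hmin⟩ := (isCompact_crossPolytope e (finrank ℝ F)).exists_isMinOn ⟨y, hy⟩
    hφcont.norm
  refine ⟨x, hK hx, ?_⟩
  by_contra hgx
  obtain ⟨z, hz, hlt⟩ := hsmall (norm_pos_iff.2 (φ.map_eq_zero_iff.not.2 hgx))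
  exact (hmin hz).not_gt hlt

end BorsukUlam

section Mobius

open Complex ComplexConjugate

/-- The automorphism of the unit disc that maps `0` to `γ` and fixes `± γ / ‖γ‖`. -/
noncomputable def mobius (γ v : ℂ) : ℂ := (γ + v) / (1 + conj γ * v)

/-- The factor by which `mobius γ` multiplies the angular speed of a path through the point `v` of
the unit circle (a Poisson kernel). -/
noncomputable def mobiusSpeed (γ v : ℂ) : ℝ := (1 - ‖γ‖ ^ 2) / ‖1 + conj γ * v‖ ^ 2

variable {γ v : ℂ}

@[simp]
lemma mobius_zero_right (γ : ℂ) : mobius γ 0 = γ := by simp [mobius]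

lemma mobius_neg_neg (γ v : ℂ) : mobius (-γ) (-v) = -mobius γ v := by
  simp only [mobius, map_neg, neg_mul_neg, ← neg_add, neg_div]

lemma one_sub_le_norm_one_add_conj_mul {r : ℝ} (hγ : ‖γ‖ ≤ r) (hv : ‖v‖ ≤ 1) :
    1 - r ≤ ‖1 + conj γ * v‖ := by
  have hmul : ‖conj γ * v‖ ≤ r := by
    rw [norm_mul, RCLike.norm_conj]
    exact (mul_le_of_le_one_right (norm_nonneg γ) hv).trans hγ
  calc 1 - r ≤ ‖(1 : ℂ)‖ - ‖conj γ * v‖ := by rw [norm_one]; gcongr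
    _ ≤ ‖1 + conj γ * v‖ := norm_sub_le_norm_add ..

lemma one_add_conj_mul_ne_zero (hγ : ‖γ‖ < 1) (hv : ‖v‖ ≤ 1) : 1 + conj γ * v ≠ 0 :=
  norm_pos_iff.1 ((sub_pos.2 hγ).trans_le (one_sub_le_norm_one_add_conj_mul le_rfl hv))

lemma norm_sq_one_add_conj_mul_sub_norm_sq_add (γ v : ℂ) :
    ‖1 + conj γ * v‖ ^ 2 - ‖γ + v‖ ^ 2 = (1 - ‖γ‖ ^ 2) * (1 - ‖v‖ ^ 2) := by
  simp only [← normSq_eq_norm_sq, normSq_apply, add_re, add_im, mul_re, mul_im, conj_re, conj_im,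
    one_re, one_im]
  ring

lemma norm_mobius_le_one (hγ : ‖γ‖ ≤ 1) (hv : ‖v‖ ≤ 1) : ‖mobius γ v‖ ≤ 1 := by
  rw [mobius, norm_div]
  refine div_le_one_of_le₀ (le_of_sq_le_sq (sub_nonneg.1 ?_) (norm_nonneg _)) (norm_nonneg _)
  rw [norm_sq_one_add_conj_mul_sub_norm_sq_add]
  have hγ_sq := pow_le_one₀ (n := 2) (norm_nonneg γ) hγ
  have hv_sq := pow_le_one₀ (n := 2) (norm_nonneg v) hv
  exact mul_nonneg (sub_nonneg.2 hγ_sq) (sub_nonneg.2 hv_sq)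

lemma norm_mobius_eq_one (hγ : ‖γ‖ < 1) (hv : ‖v‖ = 1) : ‖mobius γ v‖ = 1 := by
  have hden := norm_ne_zero_iff.2 (one_add_conj_mul_ne_zero hγ hv.le)
  have hsq := norm_sq_one_add_conj_mul_sub_norm_sq_add γ v
  rw [hv, one_pow, sub_self, mul_zero, sub_eq_zero] at hsq
  rw [mobius, norm_div, div_eq_one_iff_eq hden, ← sq_eq_sq₀ (norm_nonneg _) (norm_nonneg _), hsq]

lemma hasDerivAt_mobius (h : 1 + conj γ * v ≠ 0) :
    HasDerivAt (mobius γ) ((1 - ‖γ‖ ^ 2) / (1 + conj γ * v) ^ 2) v := by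
  have hnum : HasDerivAt (fun v ↦ γ + v) 1 v := (hasDerivAt_id v).const_add γ
  have hden : HasDerivAt (fun v ↦ 1 + conj γ * v) (conj γ) v := by
    simpa using ((hasDerivAt_id v).const_mul (conj γ)).const_add 1
  refine (hnum.div hden h).congr_deriv ?_
  rw [← mul_conj']
  ring

lemma mobiusSpeed_nonneg (hγ : ‖γ‖ ≤ 1) (v : ℂ) : 0 ≤ mobiusSpeed γ v :=
  div_nonneg (sub_nonneg.2 (pow_le_one₀ (norm_nonneg γ) hγ)) (by positivity)

lemma mul_deriv_mobius (hγ : ‖γ‖ < 1) (hv : ‖v‖ = 1) :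
    v * ((1 - ‖γ‖ ^ 2) / (1 + conj γ * v) ^ 2) = mobiusSpeed γ v * mobius γ v := by
  have hden := one_add_conj_mul_ne_zero hγ hv.le
  have hden_conj : 1 + γ * conj v ≠ 0 := by simpa using (map_ne_zero (starRingEnd ℂ)).2 hden
  have hvv : v * conj v = 1 := by simp [mul_conj', hv]
  have hnum : γ + v = v * (1 + γ * conj v) := by linear_combination -γ * hvv
  have hnorm : ((‖1 + conj γ * v‖ ^ 2 : ℝ) : ℂ) = (1 + conj γ * v) * (1 + γ * conj v) := by
    simp [← mul_conj']
  rw [mobiusSpeed, mobius, ofReal_div, hnorm, hnum]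
  field_simp
  push_cast
  ring

lemma mobiusSpeed_eq_one_sub (hγ : ‖γ‖ < 1) (hv : ‖v‖ = 1) :
    mobiusSpeed γ v = 1 - 2 * (conj γ * v / (1 + conj γ * v)).re := by
  have hden := normSq_pos.2 (one_add_conj_mul_ne_zero hγ hv.le)
  have hnorm : ‖γ‖ = ‖conj γ * v‖ := by simp [hv]
  rw [mobiusSpeed, hnorm]
  generalize conj γ * v = a at *
  rw [← normSq_eq_norm_sq, ← normSq_eq_norm_sq, div_re]
  field_simp
  simp only [normSq_apply, add_re, add_im, one_re, one_im]
  ring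

lemma norm_mobius_sub_mobius_le {γ' v' : ℂ} {r : ℝ} (hr : r < 1) (hγ : ‖γ‖ ≤ r) (hγ' : ‖γ'‖ ≤ r)
    (hv : ‖v‖ ≤ 1) (hv' : ‖v'‖ ≤ 1) :
    ‖mobius γ v - mobius γ' v'‖ ≤ 2 / (1 - r) * (‖γ - γ'‖ + ‖v - v'‖) := by
  have hden : 1 + conj γ * v ≠ 0 := one_add_conj_mul_ne_zero (hγ.trans_lt hr) hv
  have hden' : 1 + conj γ' * v' ≠ 0 := one_add_conj_mul_ne_zero (hγ'.trans_lt hr) hv'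
  have hγ'_one : ‖γ'‖ ≤ 1 := hγ'.trans hr.le
  have hsub : mobius γ v - mobius γ' v' = ((γ - γ' + (v - v')) -
      mobius γ' v' * (conj (γ - γ') * v + conj γ' * (v - v'))) / (1 + conj γ * v) := by
    have hmul : mobius γ v * (1 + conj γ * v) = γ + v := div_mul_cancel₀ _ hden
    have hmul' : mobius γ' v' * (1 + conj γ' * v') = γ' + v' := div_mul_cancel₀ _ hden'
    rw [eq_div_iff hden, map_sub]
    linear_combination hmul - hmul'
  have hleft : ‖γ - γ' + (v - v')‖ ≤ ‖γ - γ'‖ + ‖v - v'‖ := norm_add_le ..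
  have hright : ‖mobius γ' v' * (conj (γ - γ') * v + conj γ' * (v - v'))‖ ≤
      ‖γ - γ'‖ + ‖v - v'‖ := calc
    _ ≤ 1 * (‖conj (γ - γ')‖ * ‖v‖ + ‖conj γ'‖ * ‖v - v'‖) :=
      norm_mul_le_of_le (norm_mobius_le_one hγ'_one hv')
        (norm_add_le_of_le (norm_mul_le ..) (norm_mul_le ..))
    _ ≤ 1 * (‖γ - γ'‖ * 1 + 1 * ‖v - v'‖) := by
      simp only [RCLike.norm_conj]
      gcongr
    _ = ‖γ - γ'‖ + ‖v - v'‖ := by ring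
  rw [hsub, norm_div, div_mul_eq_mul_div]
  refine div_le_div₀ (by positivity) ?_ (sub_pos.2 hr) (one_sub_le_norm_one_add_conj_mul hγ hv)
  exact (norm_sub_le_of_le hleft hright).trans_eq (two_mul _).symm

end Mobius

section PositiveLoop

open Complex ComplexConjugate
open scoped ContDiff FourierTransform

/-- `h` restricts to a smooth loop `[0, 1] → S¹` that turns counterclockwise with angular
speed `k`. -/
structure IsPositiveLoop (h : ℝ → ℂ) (k : ℝ → ℝ) : Prop where
  contDiff : ContDiff ℝ ∞ h
  norm_eq_one : ∀ x, ‖h x‖ = 1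
  map_one_eq_map_zero : h 1 = h 0
  continuous_speed : Continuous k
  speed_nonneg : ∀ x, 0 ≤ k x
  hasDerivAt : ∀ x, HasDerivAt h (I * k x * h x) x

namespace IsPositiveLoop

lemma const {c : ℂ} (hc : ‖c‖ = 1) : IsPositiveLoop (fun _ ↦ c) 0 where
  contDiff := contDiff_const
  norm_eq_one _ := hc
  map_one_eq_map_zero := rfl
  continuous_speed := continuous_const
  speed_nonneg _ := le_rfl
  hasDerivAt x := by simpa using hasDerivAt_const x c

lemma fourierChar : IsPositiveLoop (fun x ↦ 𝐞 x) fun _ ↦ 2 * Real.pi where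
  contDiff := by
    simp only [Real.fourierChar_apply]
    exact ((Complex.ofRealCLM.contDiff.comp (contDiff_const.mul contDiff_id)).mul
      contDiff_const).cexp
  norm_eq_one x := Circle.norm_coe _
  map_one_eq_map_zero := by simp [Real.fourierChar_apply]
  continuous_speed := continuous_const
  speed_nonneg _ := by positivity
  hasDerivAt x := (Real.hasDerivAt_fourierChar x).congr_deriv (by push_cast; ring)

variable {h h₁ h₂ : ℝ → ℂ} {k k₁ k₂ : ℝ → ℝ}

lemma mul (hl₁ : IsPositiveLoop h₁ k₁) (hl₂ : IsPositiveLoop h₂ k₂) :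
    IsPositiveLoop (fun x ↦ h₁ x * h₂ x) fun x ↦ k₁ x + k₂ x where
  contDiff := hl₁.contDiff.mul hl₂.contDiff
  norm_eq_one x := by rw [norm_mul, hl₁.norm_eq_one, hl₂.norm_eq_one, one_mul]
  map_one_eq_map_zero := by rw [hl₁.map_one_eq_map_zero, hl₂.map_one_eq_map_zero]
  continuous_speed := hl₁.continuous_speed.add hl₂.continuous_speed
  speed_nonneg x := add_nonneg (hl₁.speed_nonneg x) (hl₂.speed_nonneg x)
  hasDerivAt x := ((hl₁.hasDerivAt x).mul (hl₂.hasDerivAt x)).congr_deriv (by push_cast; ring)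

lemma mobius (hl : IsPositiveLoop h k) {γ : ℂ} (hγ : ‖γ‖ < 1) :
    IsPositiveLoop (fun x ↦ mobius γ (h x)) fun x ↦ k x * mobiusSpeed γ (h x) where
  contDiff := by
    simp only [LazarevLieb.mobius, div_eq_mul_inv]
    exact (contDiff_const.add hl.contDiff).mul
      ((contDiff_const.add (contDiff_const.mul hl.contDiff)).inv
        fun x ↦ one_add_conj_mul_ne_zero hγ (hl.norm_eq_one x).le)
  norm_eq_one x := norm_mobius_eq_one hγ (hl.norm_eq_one x)
  map_one_eq_map_zero := by rw [hl.map_one_eq_map_zero]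
  continuous_speed := by
    have := hl.contDiff.continuous
    refine hl.continuous_speed.mul (Continuous.div (by fun_prop) (by fun_prop) fun x ↦ ?_)
    exact pow_ne_zero 2 (norm_ne_zero_iff.2
      (one_add_conj_mul_ne_zero hγ (hl.norm_eq_one x).le))
  speed_nonneg x := mul_nonneg (hl.speed_nonneg x) (mobiusSpeed_nonneg hγ.le _)
  hasDerivAt x := by
    have hden := one_add_conj_mul_ne_zero hγ (hl.norm_eq_one x).le
    refine ((hasDerivAt_mobius hden).scomp x (hl.hasDerivAt x)).congr_deriv ?_
    rw [smul_eq_mul, mul_assoc, mul_deriv_mobius hγ (hl.norm_eq_one x)]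
    push_cast
    ring

lemma hasDerivAt_im_log (hl : IsPositiveLoop h k) {γ : ℂ} (hγ : ‖γ‖ < 1) (x : ℝ) :
    HasDerivAt (fun x ↦ 2 * (log (1 + conj γ * h x)).im) (k x - k x * mobiusSpeed γ (h x)) x := by
  have hslit : 1 + conj γ * h x ∈ slitPlane :=
    mem_slitPlane_of_norm_lt_one (by simpa [hl.norm_eq_one] using hγ)
  have hlog := (((hl.hasDerivAt x).const_mul (conj γ)).const_add 1).clog_real hslit
  refine ((imCLM.hasFDerivAt.comp_hasDerivAt x hlog).const_mul 2).congr_deriv ?_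
  have hmul : conj γ * (I * k x * h x) / (1 + conj γ * h x) =
      k x * (I * (conj γ * h x / (1 + conj γ * h x))) := by ring
  rw [mobiusSpeed_eq_one_sub hγ (hl.norm_eq_one x), hmul, imCLM_apply, im_ofReal_mul, I_mul_im]
  ring

-- The argument of `1 + conj γ * h` is single-valued along the loop, so it does not contribute to
-- the total angle.
lemma integral_speed_mobius (hl : IsPositiveLoop h k) {γ : ℂ} (hγ : ‖γ‖ < 1) :
    ∫ x in (0 : ℝ)..1, k x * mobiusSpeed γ (h x) = ∫ x in (0 : ℝ)..1, k x := by
  have hk := hl.continuous_speed.intervalIntegrable (μ := volume) 0 1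
  have hk' := (hl.mobius hγ).continuous_speed.intervalIntegrable (μ := volume) 0 1
  have hftc := intervalIntegral.integral_eq_sub_of_hasDerivAt
    (fun x _ ↦ hl.hasDerivAt_im_log hγ x) (hk.sub hk')
  rw [hl.map_one_eq_map_zero, sub_self, intervalIntegral.integral_sub hk hk', sub_eq_zero] at hftc
  exact hftc.symm

lemma integral_norm_add_integral_norm_derivWithin (hl : IsPositiveLoop h k) :
    (∫ x in (0 : ℝ)..1, ‖h x‖) + ∫ x in (0 : ℝ)..1, ‖derivWithin h (Set.Icc 0 1) x‖ =
      1 + ∫ x in (0 : ℝ)..1, k x := by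
  congr 1
  · simp [hl.norm_eq_one]
  · refine intervalIntegral.integral_congr fun x hx ↦ ?_
    rw [Set.uIcc_of_le zero_le_one] at hx
    simp [(hl.hasDerivAt x).hasDerivWithinAt.derivWithin (uniqueDiffOn_Icc zero_lt_one x hx),
      hl.norm_eq_one, abs_of_nonneg (hl.speed_nonneg x)]

end IsPositiveLoop

end PositiveLoop

section Blaschke

open Complex
open scoped FourierTransform

variable {n : ℕ}

/-- The last Schur parameter of `blaschke w`, which is its value at the origin; it is `0`
when `w = 0`. -/
noncomputable def schurParam (w : Fin (n + 1) → ℂ) : ℂ := w (Fin.last n) / (∑ i, ‖w i‖ : ℝ)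

/-- The Blaschke product of degree at most `n - 1` built from `w` by the Schur algorithm; it is
`0` when `w = 0`. -/
noncomputable def blaschke : {n : ℕ} → (Fin n → ℂ) → ℂ → ℂ
  | 0, _, _ => 0
  | _ + 1, w, z => mobius (schurParam w) (z * blaschke (Fin.init w) z)

lemma sum_norm_pos {ι E : Type*} [Fintype ι] [NormedAddCommGroup E] {w : ι → E} (hw : w ≠ 0) :
    0 < ∑ i, ‖w i‖ := by
  obtain ⟨i, hi⟩ := Function.ne_iff.1 hw
  exact Finset.sum_pos' (fun i _ ↦ norm_nonneg (w i)) ⟨i, Finset.mem_univ i, norm_pos_iff.2 hi⟩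

lemma schurParam_neg (w : Fin (n + 1) → ℂ) : schurParam (-w) = -schurParam w := by
  simp [schurParam, neg_div]

lemma norm_schurParam (w : Fin (n + 1) → ℂ) :
    ‖schurParam w‖ = ‖w (Fin.last n)‖ / (∑ i, ‖Fin.init w i‖ + ‖w (Fin.last n)‖) := by
  have hsum : 0 ≤ ∑ i, ‖w i‖ := by positivity
  rw [schurParam, norm_div, norm_real, Real.norm_of_nonneg hsum, Fin.sum_univ_castSucc]
  rfl

lemma norm_schurParam_lt_one {w : Fin (n + 1) → ℂ} (hw : Fin.init w ≠ 0) : ‖schurParam w‖ < 1 := by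
  have hpos := sum_norm_pos hw
  rw [norm_schurParam, div_lt_one (by positivity)]
  exact lt_add_of_pos_left _ hpos

lemma norm_schurParam_eq_one {w : Fin (n + 1) → ℂ} (hw : w ≠ 0) (hinit : Fin.init w = 0) :
    ‖schurParam w‖ = 1 := by
  have hlast : w (Fin.last n) ≠ 0 := fun hlast ↦
    hw (funext (Fin.lastCases hlast fun i ↦ congr_fun hinit i))
  simp [norm_schurParam, hinit, hlast]

lemma norm_schurParam_le_one (w : Fin (n + 1) → ℂ) : ‖schurParam w‖ ≤ 1 := by
  rw [norm_schurParam]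
  exact div_le_one_of_le₀ (le_add_of_nonneg_left (by positivity)) (by positivity)

lemma continuousAt_schurParam {w : Fin (n + 1) → ℂ} (hw : w ≠ 0) : ContinuousAt schurParam w := by
  have hsum : Continuous fun w : Fin (n + 1) → ℂ ↦ ∑ i, ‖w i‖ := by fun_prop
  exact (continuous_apply (Fin.last n)).continuousAt.div
    (continuous_ofReal.comp hsum).continuousAt (ofReal_ne_zero.2 (sum_norm_pos hw).ne')

lemma blaschke_zero : blaschke (0 : Fin n → ℂ) = 0 := by
  induction n with
  | zero => rfl
  | succ n ih =>
    funext z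
    have hinit : Fin.init (0 : Fin (n + 1) → ℂ) = 0 := rfl
    simp [blaschke, hinit, ih, schurParam]

lemma blaschke_eq_schurParam_of_init_eq_zero {w : Fin (n + 1) → ℂ} (hinit : Fin.init w = 0)
    (z : ℂ) : blaschke w z = schurParam w := by
  simp [blaschke, hinit, blaschke_zero]

lemma blaschke_neg (w : Fin n → ℂ) (z : ℂ) : blaschke (-w) z = -blaschke w z := by
  induction n with
  | zero => simp [blaschke]
  | succ n ih =>
    have hinit : Fin.init (-w) = -Fin.init w := rfl
    simp only [blaschke, hinit, ih, schurParam_neg, mul_neg, mobius_neg_neg]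

lemma norm_blaschke_le_one (w : Fin n → ℂ) {z : ℂ} (hz : ‖z‖ ≤ 1) : ‖blaschke w z‖ ≤ 1 := by
  induction n with
  | zero => simp [blaschke]
  | succ n ih =>
    refine norm_mobius_le_one (norm_schurParam_le_one w) ?_
    rw [norm_mul]
    exact mul_le_one₀ hz (norm_nonneg _) (ih _)

lemma differentiableAt_blaschke (w : Fin n → ℂ) {z : ℂ} (hz : ‖z‖ ≤ 1) :
    DifferentiableAt ℂ (blaschke w) z := by
  induction n with
  | zero => exact differentiableAt_const 0
  | succ n ih =>
    by_cases hinit : Fin.init w = 0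
    · rw [funext (blaschke_eq_schurParam_of_init_eq_zero hinit)]
      exact differentiableAt_const _
    · have hle : ‖z * blaschke (Fin.init w) z‖ ≤ 1 := by
        rw [norm_mul]
        exact mul_le_one₀ hz (norm_nonneg _) (norm_blaschke_le_one _ hz)
      have hden := one_add_conj_mul_ne_zero (norm_schurParam_lt_one hinit) hle
      exact (hasDerivAt_mobius hden).differentiableAt.comp z (differentiableAt_id.mul (ih _))

lemma continuous_blaschke_fourierChar (w : Fin n → ℂ) : Continuous fun x : ℝ ↦ blaschke w (𝐞 x) :=
  continuous_iff_continuousAt.2 fun x ↦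
    (differentiableAt_blaschke w (Circle.norm_coe (𝐞 x)).le).continuousAt.comp
      (f := fun x : ℝ ↦ (𝐞 x : ℂ)) IsPositiveLoop.fourierChar.contDiff.continuous.continuousAt

lemma integral_blaschke_fourierChar (w : Fin (n + 1) → ℂ) :
    ∫ x in (0 : ℝ)..1, blaschke w (𝐞 x) = schurParam w := by
  have hdiff : DiffContOnCl ℂ (blaschke w) (Metric.ball 0 |1|) := by
    refine DifferentiableOn.diffContOnCl fun z hz ↦ ?_
    rw [abs_one, closure_ball _ one_ne_zero, mem_closedBall_zero_iff] at hz
    exact (differentiableAt_blaschke w hz).differentiableWithinAt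
  have hcircle (x : ℝ) : (𝐞 x : ℂ) = circleMap 0 1 (2 * Real.pi * x) := by
    simp [Real.fourierChar_apply, circleMap]
  calc ∫ x in (0 : ℝ)..1, blaschke w (𝐞 x)
      = Real.circleAverage (blaschke w) 0 1 := by
        simp only [hcircle, Real.circleAverage_def]
        rw [intervalIntegral.integral_comp_mul_left (fun θ ↦ blaschke w (circleMap 0 1 θ))
          Real.two_pi_pos.ne', mul_zero, mul_one]
    _ = blaschke w 0 := hdiff.circleAverage
    _ = schurParam w := by simp [blaschke]

lemma exists_isPositiveLoop_blaschke {n : ℕ} {w : Fin (n + 1) → ℂ} (hw : w ≠ 0) :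
    ∃ k, IsPositiveLoop (fun x ↦ blaschke w (𝐞 x)) k ∧
      ∫ x in (0 : ℝ)..1, k x ≤ 2 * Real.pi * n := by
  by_cases hinit : Fin.init w = 0
  · refine ⟨0, ?_, ?_⟩
    · simpa only [blaschke_eq_schurParam_of_init_eq_zero hinit] using
        IsPositiveLoop.const (norm_schurParam_eq_one hw hinit)
    · rw [Pi.zero_def, intervalIntegral.integral_zero]
      positivity
  · cases n with
    | zero => exact absurd (Subsingleton.elim _ _) hinit
    | succ n =>
      obtain ⟨k, hk, hle⟩ := exists_isPositiveLoop_blaschke hinit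
      have hloop := IsPositiveLoop.fourierChar.mul hk
      have hγ := norm_schurParam_lt_one hinit
      refine ⟨_, hloop.mobius hγ, ?_⟩
      rw [hloop.integral_speed_mobius hγ, intervalIntegral.integral_add
        intervalIntegrable_const (hk.continuous_speed.intervalIntegrable 0 1)]
      push_cast
      simp only [intervalIntegral.integral_const, sub_zero, one_smul]
      linarith

end Blaschke

section Convergence

open Filter Topology
open scoped RealInnerProductSpace

variable {Ω : Type*} [MeasurableSpace Ω] {μ : Measure Ω}

lemma integral_norm_sub_sq_of_norm_eq_one [IsProbabilityMeasure μ] {H : Type*}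
    [NormedAddCommGroup H] [InnerProductSpace ℝ H] [CompleteSpace H] {h : Ω → H}
    (hmeas : AEStronglyMeasurable h μ) (hnorm : ∀ x, ‖h x‖ = 1) {c : H} (hc : ‖c‖ = 1) :
    ∫ x, ‖h x - c‖ ^ 2 ∂μ = 2 - 2 * ⟪c, ∫ x, h x ∂μ⟫ := by
  have hint : Integrable h μ := .of_bound hmeas 1 (ae_of_all μ fun x ↦ (hnorm x).le)
  have hexpand (x : Ω) : ‖h x - c‖ ^ 2 = 2 - 2 * ⟪c, h x⟫ := by
    rw [norm_sub_sq_real, hnorm, hc, real_inner_comm]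
    ring
  simp only [hexpand]
  rw [integral_sub (integrable_const _) ((hint.const_inner c).const_mul 2), integral_const_mul,
    integral_inner hint]
  simp

lemma tendstoInMeasure_of_tendsto_integral_norm_sub_sq {E ι : Type*} [NormedAddCommGroup E]
    {l : Filter ι} {u : ι → Ω → E} {v : Ω → E} (hu : ∀ i, MemLp (u i) 2 μ) (hv : MemLp v 2 μ)
    (h : Tendsto (fun i ↦ ∫ x, ‖u i x - v x‖ ^ 2 ∂μ) l (𝓝 0)) : TendstoInMeasure μ u l v := by
  refine tendstoInMeasure_of_tendsto_eLpNorm two_ne_zero (fun i ↦ (hu i).1) hv.1 ?_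
  have heLpNorm (i : ι) :
      eLpNorm (u i - v) 2 μ = ENNReal.ofReal √(∫ x, ‖u i x - v x‖ ^ 2 ∂μ) := by
    rw [((hu i).sub hv).eLpNorm_eq_integral_rpow_norm two_ne_zero ENNReal.ofNat_ne_top]
    simp [Real.sqrt_eq_rpow]
  simp only [heLpNorm]
  simpa using ENNReal.tendsto_ofReal h.sqrt

lemma tendsto_integral_mul_of_tendstoInMeasure {A ι : Type*} [NormedRing A] [NormedSpace ℝ A]
    {l : Filter ι} [l.IsCountablyGenerated] {f : Ω → A} {u : ι → Ω → A} {v : Ω → A} {C : ℝ}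
    (hf : Integrable f μ) (hu : ∀ i, AEStronglyMeasurable (u i) μ) (hC : ∀ i x, ‖u i x‖ ≤ C)
    (h : TendstoInMeasure μ u l v) :
    Tendsto (fun i ↦ ∫ x, f x * u i x ∂μ) l (𝓝 (∫ x, f x * v x ∂μ)) := by
  refine tendsto_of_subseq_tendsto fun ns hns ↦ ?_
  have hns_measure : TendstoInMeasure μ (fun m ↦ u (ns m)) atTop v := fun ε hε ↦ (h ε hε).comp hns
  obtain ⟨ms, -, hms⟩ := hns_measure.exists_seq_tendsto_ae
  refine ⟨ms, tendsto_integral_of_dominated_convergence (fun x ↦ ‖f x‖ * C)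
    (fun m ↦ hf.1.mul (hu _)) (hf.norm.mul_const C) (fun m ↦ ae_of_all μ fun x ↦ ?_) ?_⟩
  · exact norm_mul_le_of_le le_rfl (hC _ x)
  · filter_upwards [hms] with x hx using hx.const_mul (f x)

end Convergence

section BlaschkeContinuity

open Complex Filter Topology
open scoped FourierTransform RealInnerProductSpace

variable {n : ℕ}

lemma norm_blaschke_fourierChar {w : Fin n → ℂ} (hw : w ≠ 0) (x : ℝ) : ‖blaschke w (𝐞 x)‖ = 1 := by
  cases n with
  | zero => exact absurd (Subsingleton.elim _ _) hw
  | succ n =>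
    obtain ⟨k, hk, -⟩ := exists_isPositiveLoop_blaschke hw
    exact hk.norm_eq_one x

-- The mean of the unimodular function `blaschke w` tends to a point of the unit circle, which
-- forces convergence in `L²`; uniform convergence fails.
lemma tendsto_integral_norm_blaschke_sub_schurParam_sq {w₀ : Fin (n + 1) → ℂ} (hw₀ : w₀ ≠ 0)
    (hinit : Fin.init w₀ = 0) :
    Tendsto (fun w ↦ ∫ x in (0 : ℝ)..1, ‖blaschke w (𝐞 x) - schurParam w₀‖ ^ 2) (𝓝 w₀) (𝓝 0) := by
  have : IsProbabilityMeasure (volume.restrict (Set.Ioc (0 : ℝ) 1)) := ⟨by simp⟩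
  have hnorm := norm_schurParam_eq_one hw₀ hinit
  have hlim : Tendsto (fun w ↦ 2 - 2 * ⟪schurParam w₀, schurParam w⟫) (𝓝 w₀) (𝓝 0) := by
    have hinner := (tendsto_const_nhds (x := schurParam w₀)).inner (𝕜 := ℝ)
      (continuousAt_schurParam hw₀).tendsto
    simpa [real_inner_self_eq_norm_sq, hnorm] using (hinner.const_mul 2).const_sub 2
  refine hlim.congr' ?_
  filter_upwards [eventually_ne_nhds hw₀] with w hw
  rw [← integral_blaschke_fourierChar w]
  simp only [intervalIntegral.integral_of_le zero_le_one]
  exact (integral_norm_sub_sq_of_norm_eq_one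
    (continuous_blaschke_fourierChar w).aestronglyMeasurable (norm_blaschke_fourierChar hw)
    hnorm).symm

lemma norm_blaschke_sub_sq_le {w w' : Fin (n + 1) → ℂ} {r : ℝ} (hr : r < 1)
    (hw : ‖schurParam w‖ ≤ r) (hw' : ‖schurParam w'‖ ≤ r) (x : ℝ) :
    ‖blaschke w (𝐞 x) - blaschke w' (𝐞 x)‖ ^ 2 ≤
      (2 / (1 - r)) ^ 2 * 2 * (‖schurParam w - schurParam w'‖ ^ 2 +
        ‖blaschke (Fin.init w) (𝐞 x) - blaschke (Fin.init w') (𝐞 x)‖ ^ 2) := by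
  have hle (w : Fin n → ℂ) : ‖𝐞 x * blaschke w (𝐞 x)‖ ≤ 1 := by
    rw [norm_mul, Circle.norm_coe, one_mul]
    exact norm_blaschke_le_one w (Circle.norm_coe (𝐞 x)).le
  have hsub := norm_mobius_sub_mobius_le hr hw hw' (hle (Fin.init w)) (hle (Fin.init w'))
  rw [← mul_sub, norm_mul, Circle.norm_coe, one_mul] at hsub
  refine (pow_le_pow_left₀ (norm_nonneg _) hsub 2).trans ?_
  rw [mul_pow, mul_assoc]
  gcongr
  exact add_sq_le

lemma integral_norm_blaschke_sub_sq_le {w w' : Fin (n + 1) → ℂ} {r : ℝ} (hr : r < 1)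
    (hw : ‖schurParam w‖ ≤ r) (hw' : ‖schurParam w'‖ ≤ r) :
    ∫ x in (0 : ℝ)..1, ‖blaschke w (𝐞 x) - blaschke w' (𝐞 x)‖ ^ 2 ≤
      (2 / (1 - r)) ^ 2 * 2 * (‖schurParam w - schurParam w'‖ ^ 2 +
        ∫ x in (0 : ℝ)..1, ‖blaschke (Fin.init w) (𝐞 x) - blaschke (Fin.init w') (𝐞 x)‖ ^ 2) := by
  have hint {m : ℕ} (w w' : Fin m → ℂ) : IntervalIntegrable
      (fun x : ℝ ↦ ‖blaschke w (𝐞 x) - blaschke w' (𝐞 x)‖ ^ 2) volume 0 1 :=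
    (((continuous_blaschke_fourierChar w).sub
      (continuous_blaschke_fourierChar w')).norm.pow 2).intervalIntegrable 0 1
  have hint_init := hint (Fin.init w) (Fin.init w')
  refine (intervalIntegral.integral_mono zero_le_one (hint w w')
    ((intervalIntegrable_const.add hint_init).const_mul _)
    (norm_blaschke_sub_sq_le hr hw hw')).trans_eq ?_
  rw [intervalIntegral.integral_const_mul,
    intervalIntegral.integral_add intervalIntegrable_const hint_init,
    intervalIntegral.integral_const, sub_zero, one_smul]

theorem tendsto_integral_norm_blaschke_sub_sq {n : ℕ} {w₀ : Fin n → ℂ} (hw₀ : w₀ ≠ 0) :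
    Tendsto (fun w ↦ ∫ x in (0 : ℝ)..1, ‖blaschke w (𝐞 x) - blaschke w₀ (𝐞 x)‖ ^ 2)
      (𝓝 w₀) (𝓝 0) := by
  induction n with
  | zero => exact absurd (Subsingleton.elim _ _) hw₀
  | succ n ih =>
    by_cases hinit : Fin.init w₀ = 0
    · simpa only [blaschke_eq_schurParam_of_init_eq_zero hinit] using
        tendsto_integral_norm_blaschke_sub_schurParam_sq hw₀ hinit
    have hparam := (continuousAt_schurParam hw₀).tendsto
    obtain ⟨r, hr₀, hr⟩ := exists_between (norm_schurParam_lt_one hinit)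
    have hparam_sub : Tendsto (fun w ↦ ‖schurParam w - schurParam w₀‖ ^ 2) (𝓝 w₀) (𝓝 0) := by
      simpa using (hparam.sub_const (schurParam w₀)).norm.pow 2
    have hinit_sub := (ih hinit).comp (continuous_id.finInit.tendsto w₀)
    have hlim := (hparam_sub.add hinit_sub).const_mul ((2 / (1 - r)) ^ 2 * 2)
    rw [add_zero, mul_zero] at hlim
    refine squeeze_zero' (.of_forall fun w ↦ intervalIntegral.integral_nonneg zero_le_one
      fun x _ ↦ by positivity) ?_ hlim
    filter_upwards [hparam.norm.eventually_lt_const hr₀] with w hw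
      using integral_norm_blaschke_sub_sq_le hr hw.le hr₀.le

lemma continuousAt_integral_mul_blaschke {f : ℝ → ℂ} (hf : IntegrableOn f (Set.Icc 0 1))
    {w₀ : Fin n → ℂ} (hw₀ : w₀ ≠ 0) :
    ContinuousAt (fun w ↦ ∫ x in (0 : ℝ)..1, f x * blaschke w (𝐞 x)) w₀ := by
  have hle (w : Fin n → ℂ) (x : ℝ) : ‖blaschke w (𝐞 x)‖ ≤ 1 :=
    norm_blaschke_le_one w (Circle.norm_coe (𝐞 x)).le
  have hmeas (w : Fin n → ℂ) : AEStronglyMeasurable (fun x : ℝ ↦ blaschke w (𝐞 x))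
      (volume.restrict (Set.Ioc 0 1)) := (continuous_blaschke_fourierChar w).aestronglyMeasurable
  have hmemLp (w : Fin n → ℂ) : MemLp (fun x : ℝ ↦ blaschke w (𝐞 x)) 2
      (volume.restrict (Set.Ioc 0 1)) := .of_bound (hmeas w) 1 (ae_of_all _ (hle w))
  have hlim := tendsto_integral_norm_blaschke_sub_sq hw₀
  simp only [intervalIntegral.integral_of_le zero_le_one] at hlim
  simp only [ContinuousAt, intervalIntegral.integral_of_le zero_le_one]
  exact tendsto_integral_mul_of_tendstoInMeasure (hf.mono_set Set.Ioc_subset_Icc_self) hmeas hle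
    (tendstoInMeasure_of_tendsto_integral_norm_sub_sq hmemLp (hmemLp w₀) hlim)

open Module in
lemma exists_forall_integral_mul_blaschke_eq_zero {f : Fin n → ℝ → ℂ}
    (hf : ∀ j, IntegrableOn (f j) (Set.Icc 0 1)) :
    ∃ w : Fin (n + 1) → ℂ, w ≠ 0 ∧ ∀ j, ∫ x in (0 : ℝ)..1, f j x * blaschke w (𝐞 x) = 0 := by
  let g (w : Fin (n + 1) → ℂ) (j : Fin n) : ℂ := ∫ x in (0 : ℝ)..1, f j x * blaschke w (𝐞 x)
  have hodd (w : Fin (n + 1) → ℂ) : g (-w) = -g w := by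
    funext j
    simp [g, blaschke_neg]
  have hcont : ContinuousOn g {0}ᶜ := fun w hw ↦ (continuousAt_pi.2 fun j ↦
    continuousAt_integral_mul_blaschke (hf j) hw).continuousWithinAt
  have hdim : finrank ℝ (Fin n → ℂ) < finrank ℝ (Fin (n + 1) → ℂ) := by
    simp [finrank_pi_fintype, Complex.finrank_real_complex]
  obtain ⟨w, hw, hgw⟩ := borsuk_ulam hdim hodd hcont
  exact ⟨w, hw, congr_fun hgw⟩

end BlaschkeContinuity

end LazarevLieb

/-- **Lazarev–Lieb theorem with a `W^{1,1}`-norm bound.** Given integrable complex-valued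
functions `f 1, …, f n` on `[0,1]`, there is a smooth function `h : [0,1] → S¹` with
`‖h‖_{W^{1,1}} ≤ 1 + 2πn` such that `∫₀¹ f j · h = 0` for all `j`. -/
theorem lazarev_lieb_with_bound (n : ℕ) (f : Fin n → ℝ → ℂ)
    (hf : ∀ j, IntegrableOn (f j) (Set.Icc 0 1)) :
    ∃ h : ℝ → ℂ,
      ContDiffOn ℝ (⊤ : ℕ∞) h (Set.Icc 0 1) ∧
      (∀ x ∈ Set.Icc (0:ℝ) 1, ‖h x‖ = 1) ∧
      (∫ x in (0:ℝ)..1, ‖h x‖) + (∫ x in (0:ℝ)..1, ‖derivWithin h (Set.Icc 0 1) x‖)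
        ≤ 1 + 2 * Real.pi * n ∧
      ∀ j : Fin n, ∫ x in (0:ℝ)..1, f j x * h x = 0 := by
  obtain ⟨w, hw, hzero⟩ := LazarevLieb.exists_forall_integral_mul_blaschke_eq_zero hf
  obtain ⟨k, hloop, hlength⟩ := LazarevLieb.exists_isPositiveLoop_blaschke hw
  refine ⟨_, hloop.contDiff.contDiffOn, fun x _ ↦ hloop.norm_eq_one x, ?_, hzero⟩
  rw [hloop.integral_norm_add_integral_norm_derivWithin]
  gcongr
end

section
/- Let Y, Z be topological spaces, let ρ : Y → Y be continuous, and let σ : Z → Z be a continuous involution (σ ∘ σ = id). Let φ : Y → Z be continuous with σ ∘ φ = φ ∘ ρ. Let ≼ be a preorder on Y and let Y²_≼ = {(y_0, y_1) ∈ Y × Y : y_0 ≼ y_1} with the subspace topology of the product. Let PY = C([0,1], Y) with the compact-open topology, and let s : (0,1] × Y²_≼ → PY be a continuous map with s(w, (y_0, y_1))(0) = y_0 and s(w, (y_0, y_1))(1) = y_1 for all w, satisfying the continuity property: for all y ∈ Y and all neighborhoods V of φ(y) in Z, there exist a neighborhood U of φ(y) in Z and δ > 0 such that whenever φ(y_0),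 φ(y_1) ∈ U, y_0 ≼ y_1, and w < δ, one has φ(s(w, (y_0, y_1))(t)) ∈ V for all t ∈ [0,1]. Assume moreover: (1) y ≼ ρ(y) for all y ∈ Y; (2) ρ(y_0) ≼ ρ(y_1) if and only if y_0 ≼ y_1; (3) y_0 ≼ y_1 implies y_0 ≼ s(w, (y_0, y_1))(t) ≼ y_1 for all w ∈ (0,1], t ∈ [0,1]. Then for each integer n ≥ 0 and each y* ∈ Y, there exists a continuous map β_n : S^n → Z with β_n(−x) = σ(β_n(x)) for all x ∈ S^n, such that every positive point x ∈ S^n satisfies β_n(x) = φ(y) for some y ∈ Y with y* ≼ y ≼ ρ^n(y*). -/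
open MeasureTheory

/-- A point `x ∈ Sⁿ ⊆ ℝ^{n+1}` is *positive* if its last nonzero coordinate is positive. -/
def IsPositivePoint {m : ℕ} (x : EuclideanSpace ℝ (Fin m)) : Prop :=
  ∃ k : Fin m, 0 < x k ∧ ∀ j : Fin m, k < j → x j = 0

/-!
The maps `βₙ` are built by induction through their upper hemispheres, viewed as maps `fₙ` on the
closed ball `Dⁿ`. On the open ball `fₙ = φ ∘ Aₙ` for a lift `Aₙ` with `Aₙ x ≼ ρ (Aₙ (-x))`, while on
the boundary sphere `fₙ` is equivariant; so `βₙ` is `fₙ` on the upper hemisphere and its conjugate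
`σ ∘ fₙ ∘ (-·)` on the lower one. To extend `βₙ` to `fₙ₊₁ : Dⁿ⁺¹ → Z`, run over each vertical chord
of `Dⁿ⁺¹` along the path from `Aₙ x` to `ρ (Aₙ (-x))` planned by `s`, with parameter `w` half the
length of the chord. At the equator the chords shrink to points, so `w → 0`, and the continuity
property of `s` is exactly what makes the extension continuous there.
-/

open Set Metric Filter Topology

section Coordinates

variable {n : ℕ}

/-- The projection `ℝⁿ⁺¹ → ℝⁿ` forgetting the last coordinate. It identifies each closed hemisphere
of `Sⁿ` with the closed unit ball of `ℝⁿ`. -/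
def initCoords (x : EuclideanSpace ℝ (Fin (n + 1))) : EuclideanSpace ℝ (Fin n) :=
  WithLp.toLp 2 (Fin.init x.ofLp)

lemma initCoords_neg (x : EuclideanSpace ℝ (Fin (n + 1))) : initCoords (-x) = -initCoords x := rfl

@[fun_prop]
lemma continuous_initCoords : Continuous (initCoords (n := n)) :=
  (PiLp.continuous_toLp 2 _).comp (PiLp.continuous_ofLp 2 _).finInit

lemma norm_sq_eq_norm_initCoords_sq_add (x : EuclideanSpace ℝ (Fin (n + 1))) :
    ‖x‖ ^ 2 = ‖initCoords x‖ ^ 2 + x (Fin.last n) ^ 2 := by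
  simp only [EuclideanSpace.real_norm_sq_eq, Fin.sum_univ_castSucc, initCoords, Fin.init]

lemma norm_initCoords_le (x : EuclideanSpace ℝ (Fin (n + 1))) : ‖initCoords x‖ ≤ ‖x‖ :=
  le_of_sq_le_sq (by linarith [norm_sq_eq_norm_initCoords_sq_add x, sq_nonneg (x (Fin.last n))])
    (norm_nonneg x)

lemma norm_initCoords_lt {x : EuclideanSpace ℝ (Fin (n + 1))} (hx : x (Fin.last n) ≠ 0) :
    ‖initCoords x‖ < ‖x‖ :=
  lt_of_pow_lt_pow_left₀ 2 (norm_nonneg x)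
    (by linarith [norm_sq_eq_norm_initCoords_sq_add x, sq_pos_of_ne_zero hx])

lemma norm_initCoords_of_last_eq_zero {x : EuclideanSpace ℝ (Fin (n + 1))}
    (hx : x (Fin.last n) = 0) : ‖initCoords x‖ = ‖x‖ := by
  have h := norm_sq_eq_norm_initCoords_sq_add x
  rw [hx, zero_pow two_ne_zero, add_zero] at h
  exact ((sq_eq_sq₀ (norm_nonneg x) (norm_nonneg _)).1 h).symm

lemma mapsTo_initCoords_closedBall :
    MapsTo initCoords (closedBall (0 : EuclideanSpace ℝ (Fin (n + 1))) 1) (closedBall 0 1) := by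
  intro x hx
  rw [mem_closedBall_zero_iff] at hx ⊢
  exact (norm_initCoords_le x).trans hx

lemma mapsTo_neg_initCoords_closedBall :
    MapsTo (fun x => -initCoords x) (closedBall (0 : EuclideanSpace ℝ (Fin (n + 1))) 1)
      (closedBall 0 1) := by
  intro x hx
  simpa using mapsTo_initCoords_closedBall hx

lemma IsPositivePoint.last_nonneg {x : EuclideanSpace ℝ (Fin (n + 1))} (hx : IsPositivePoint x) :
    0 ≤ x (Fin.last n) := by
  obtain ⟨k, hk_pos, hk_zero⟩ := hx
  rcases (Fin.le_last k).lt_or_eq with hk | rfl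
  · exact (hk_zero _ hk).ge
  · exact hk_pos.le

lemma IsPositivePoint.initCoords {x : EuclideanSpace ℝ (Fin (n + 1))} (hx : IsPositivePoint x)
    (hlast : x (Fin.last n) = 0) : IsPositivePoint (initCoords x) := by
  obtain ⟨k, hk_pos, hk_zero⟩ := hx
  induction k using Fin.lastCases with
  | last => exact absurd hlast hk_pos.ne'
  | cast k => exact ⟨k, hk_pos, fun j hj => hk_zero _ (Fin.castSucc_lt_castSucc_iff.2 hj)⟩

end Coordinates

section Height

variable {E : Type*} [SeminormedAddCommGroup E]

/-- The height of the upper unit hemisphere above the point `x` of the unit ball; it is `0` for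
`1 ≤ ‖x‖`. -/
noncomputable def height (x : E) : ℝ := √(1 - ‖x‖ ^ 2)

@[fun_prop]
lemma continuous_height : Continuous (height (E := E)) := by
  unfold height
  fun_prop

lemma height_mem_Ioc {x : E} (hx : ‖x‖ < 1) : height x ∈ Ioc (0 : ℝ) 1 :=
  ⟨Real.sqrt_pos.2 (by nlinarith [norm_nonneg x]),
    Real.sqrt_le_one.2 (by linarith [sq_nonneg ‖x‖])⟩

lemma height_eq_zero {x : E} (hx : ‖x‖ = 1) : height x = 0 := by
  simp [height, hx]

lemma last_eq_height_or_eq_neg_height {n : ℕ} {x : EuclideanSpace ℝ (Fin (n + 1))}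
    (hx : ‖x‖ = 1) :
    x (Fin.last n) = height (initCoords x) ∨ x (Fin.last n) = -height (initCoords x) := by
  have h := norm_sq_eq_norm_initCoords_sq_add x
  rw [hx, one_pow] at h
  rw [← sq_eq_sq_iff_eq_or_eq_neg, height, Real.sq_sqrt] <;> nlinarith [sq_nonneg (x (Fin.last n))]

end Height

section Doubling

variable {n : ℕ} {Z : Type*} {σ : Z → Z} {f : EuclideanSpace ℝ (Fin n) → Z}
  {x : EuclideanSpace ℝ (Fin (n + 1))}

/-- The equivariant map on `Sⁿ` that is given by `f` on the upper hemisphere, viewed as a map on the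
closed unit ball of `ℝⁿ`. -/
noncomputable def double (σ : Z → Z) (f : EuclideanSpace ℝ (Fin n) → Z)
    (x : EuclideanSpace ℝ (Fin (n + 1))) : Z :=
  if 0 ≤ x (Fin.last n) then f (initCoords x) else σ (f (-initCoords x))

lemma double_of_nonneg (hx : 0 ≤ x (Fin.last n)) : double σ f x = f (initCoords x) :=
  if_pos hx

lemma double_of_nonpos (hσσ : Function.Involutive σ)
    (hf : ∀ y ∈ sphere 0 1, f (-y) = σ (f y)) (hx : x ∈ sphere 0 1) (hlast : x (Fin.last n) ≤ 0) :
    double σ f x = σ (f (-initCoords x)) := by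
  rcases hlast.lt_or_eq with hneg | hzero
  · exact if_neg hneg.not_ge
  · have hinit : initCoords x ∈ sphere 0 1 := by
      rwa [mem_sphere_zero_iff_norm, norm_initCoords_of_last_eq_zero hzero,
        ← mem_sphere_zero_iff_norm]
    rw [double_of_nonneg hzero.ge, hf _ hinit, hσσ]

lemma double_neg (hσσ : Function.Involutive σ)
    (hf : ∀ y ∈ sphere 0 1, f (-y) = σ (f y)) (hx : x ∈ sphere 0 1) :
    double σ f (-x) = σ (double σ f x) := by
  have hx_neg : -x ∈ sphere 0 1 := by simpa using hx
  rcases le_total 0 (x (Fin.last n)) with hlast | hlast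
  · rw [double_of_nonneg hlast, double_of_nonpos hσσ hf hx_neg (by simpa using hlast),
      initCoords_neg, neg_neg]
  · rw [double_of_nonpos hσσ hf hx hlast, hσσ, double_of_nonneg (by simpa using hlast),
      initCoords_neg]

lemma continuousOn_double [TopologicalSpace Z] (hσ : Continuous σ) (hσσ : Function.Involutive σ)
    (hf : ∀ y ∈ sphere 0 1, f (-y) = σ (f y)) (hf_cont : ContinuousOn f (closedBall 0 1)) :
    ContinuousOn (double σ f) (sphere 0 1) := by
  refine ContinuousOn.if ?_ ?_ ?_
  · rintro x ⟨hx, hx_frontier⟩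
    have hlast : 0 = x (Fin.last n) :=
      frontier_le_subset_eq continuous_const (PiLp.continuous_apply 2 _ _) hx_frontier
    exact (double_of_nonneg hlast.le).symm.trans (double_of_nonpos hσσ hf hx hlast.ge)
  · exact (hf_cont.comp continuous_initCoords.continuousOn
      (mapsTo_initCoords_closedBall.mono_left sphere_subset_closedBall)).mono inter_subset_left
  · exact (hσ.comp_continuousOn (hf_cont.comp continuous_initCoords.neg.continuousOn
      (mapsTo_neg_initCoords_closedBall.mono_left sphere_subset_closedBall))).mono
        inter_subset_left

end Doubling

section LiftedMPA

variable {Y Z : Type*} [TopologicalSpace Y] [TopologicalSpace Z] [Preorder Y] {φ : Y → Z}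
  {s : Ioc (0 : ℝ) 1 × {p : Y × Y // p.1 ≤ p.2} → C(unitInterval, Y)}

/-- Lifted motion planning algorithms for `(Y, Z, φ, ≤)` all of whose paths stay between their
endpoints. -/
structure IsLiftedMPA (φ : Y → Z)
    (s : Ioc (0 : ℝ) 1 × {p : Y × Y // p.1 ≤ p.2} → C(unitInterval, Y)) : Prop where
  continuous : Continuous s
  source : ∀ w p, s (w, p) 0 = p.1.1
  target : ∀ w p, s (w, p) 1 = p.1.2
  exists_nhds : ∀ y, ∀ V ∈ 𝓝 (φ y), ∃ U ∈ 𝓝 (φ y), ∃ δ > (0 : ℝ),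
    ∀ (w : Ioc (0 : ℝ) 1) (p : {p : Y × Y // p.1 ≤ p.2}), φ p.1.1 ∈ U → φ p.1.2 ∈ U → w < δ →
      ∀ t, φ (s (w, p) t) ∈ V
  mem_Icc : ∀ w p t, s (w, p) t ∈ Icc p.1.1 p.1.2

open Classical in
/-- The point at time `t` of the path planned by `s` from `y₀` to `y₁` with parameter `w`, as a
total function: the time is clamped to `[0, 1]`, and the path is constant at `y₀` when `w ∉ (0, 1]`
or `¬ y₀ ≤ y₁`. -/
noncomputable def planned
    (s : Ioc (0 : ℝ) 1 × {p : Y × Y // p.1 ≤ p.2} → C(unitInterval, Y))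
    (w : ℝ) (y₀ y₁ : Y) (t : ℝ) : Y :=
  if h : w ∈ Ioc (0 : ℝ) 1 ∧ y₀ ≤ y₁ then
    s (⟨w, h.1⟩, ⟨(y₀, y₁), h.2⟩) (projIcc 0 1 zero_le_one t)
  else y₀

lemma planned_of_mem {w t : ℝ} {y₀ y₁ : Y} (hw : w ∈ Ioc (0 : ℝ) 1) (hy : y₀ ≤ y₁) :
    planned s w y₀ y₁ t = s (⟨w, hw⟩, ⟨(y₀, y₁), hy⟩) (projIcc 0 1 zero_le_one t) :=
  dif_pos ⟨hw, hy⟩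

namespace IsLiftedMPA

lemma planned_mem_Icc (hs : IsLiftedMPA φ s) (w t : ℝ) {y₀ y₁ : Y} (hy : y₀ ≤ y₁) :
    planned s w y₀ y₁ t ∈ Icc y₀ y₁ := by
  unfold planned
  split_ifs
  · exact hs.mem_Icc _ ⟨(y₀, y₁), hy⟩ _
  · exact left_mem_Icc.2 hy

lemma planned_zero (hs : IsLiftedMPA φ s) (w : ℝ) (y₀ y₁ : Y) : planned s w y₀ y₁ 0 = y₀ := by
  unfold planned
  split_ifs
  · rw [projIcc_left]
    exact hs.source _ _
  · rfl

lemma planned_one (hs : IsLiftedMPA φ s) {w : ℝ} {y₀ y₁ : Y} (hw : w ∈ Ioc (0 : ℝ) 1)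
    (hy : y₀ ≤ y₁) : planned s w y₀ y₁ 1 = y₁ := by
  rw [planned_of_mem hw hy, projIcc_right]
  exact hs.target _ _

lemma continuousOn_planned (hs : IsLiftedMPA φ s) {X : Type*} [TopologicalSpace X] {S : Set X}
    {w t : X → ℝ} {y₀ y₁ : X → Y} (hw : ContinuousOn w S) (hy₀ : ContinuousOn y₀ S)
    (hy₁ : ContinuousOn y₁ S) (ht : ContinuousOn t S) (hw_mem : ∀ x ∈ S, w x ∈ Ioc (0 : ℝ) 1)
    (hy : ∀ x ∈ S, y₀ x ≤ y₁ x) :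
    ContinuousOn (fun x => planned s (w x) (y₀ x) (y₁ x) (t x)) S := by
  rw [continuousOn_iff_continuous_domRestrict] at *
  have hplan : Continuous fun x : S =>
      s (⟨w x, hw_mem x x.2⟩, ⟨(y₀ x, y₁ x), hy x x.2⟩) (projIcc 0 1 zero_le_one (t x)) :=
    (hs.continuous.comp ((hw.subtype_mk _).prodMk ((hy₀.prodMk hy₁).subtype_mk _))).eval
      (continuous_projIcc.comp ht)
  exact hplan.congr fun x => (planned_of_mem (hw_mem x x.2) (hy x x.2)).symm

lemma tendsto_planned (hs : IsLiftedMPA φ s) {X : Type*} {l : Filter X} {w t : X → ℝ}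
    {y₀ y₁ : X → Y} {y : Y} (hw : Tendsto w l (𝓝 0)) (hy₀ : Tendsto (φ ∘ y₀) l (𝓝 (φ y)))
    (hy₁ : Tendsto (φ ∘ y₁) l (𝓝 (φ y))) :
    Tendsto (fun x => φ (planned s (w x) (y₀ x) (y₁ x) (t x))) l (𝓝 (φ y)) := by
  refine tendsto_def.2 fun V hV => ?_
  obtain ⟨U, hU, δ, hδ, hUV⟩ := hs.exists_nhds y V hV
  filter_upwards [hw (Iio_mem_nhds hδ), hy₀ hU, hy₁ hU, hy₀ hV] with x hxδ hx₀ hx₁ hxV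
  rw [mem_preimage, planned]
  split_ifs with h
  · exact hUV ⟨w x, h.1⟩ ⟨(y₀ x, y₁ x), h.2⟩ hx₀ hx₁ hxδ _
  · exact hxV

end IsLiftedMPA

end LiftedMPA

section Hemispheres

variable {Y Z : Type*} [TopologicalSpace Y] [TopologicalSpace Z] [Preorder Y]
  {ρ : Y → Y} {σ : Z → Z} {φ : Y → Z} {a b : Y} {n : ℕ}
  {A : EuclideanSpace ℝ (Fin n) → Y} {f : EuclideanSpace ℝ (Fin n) → Z}
  {s : Ioc (0 : ℝ) 1 × {p : Y × Y // p.1 ≤ p.2} → C(unitInterval, Y)}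
  {x : EuclideanSpace ℝ (Fin (n + 1))}

/-- `f`, on the closed unit ball, is the upper hemisphere of an equivariant map on `Sⁿ` sending
positive points into `φ '' [a, b]`, and `A` is a lift of `f` through `φ` over the open unit ball.
The values of `A` outside the open ball and of `f` outside the closed ball are irrelevant. -/
structure IsLiftedHemisphere (ρ : Y → Y) (σ : Z → Z) (φ : Y → Z) (a b : Y)
    (A : EuclideanSpace ℝ (Fin n) → Y) (f : EuclideanSpace ℝ (Fin n) → Z) : Prop where
  continuousOn_lift : ContinuousOn A (ball 0 1)
  lift_le : ∀ x ∈ ball 0 1, A x ≤ ρ (A (-x))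
  lift_mem_Icc : ∀ x ∈ ball 0 1, A x ∈ Icc a b
  continuousOn : ContinuousOn f (closedBall 0 1)
  eq_lift : ∀ x ∈ ball 0 1, f x = φ (A x)
  mem_range : ∀ x ∈ closedBall 0 1, f x ∈ range φ
  map_neg : ∀ x ∈ sphere 0 1, f (-x) = σ (f x)
  mem_image_of_isPositivePoint : ∀ x ∈ sphere 0 1, IsPositivePoint x → f x ∈ φ '' Icc a b

lemma isLiftedHemisphere_const (hle : a ≤ ρ a) :
    IsLiftedHemisphere ρ σ φ a a (fun _ : EuclideanSpace ℝ (Fin 0) => a) (fun _ => φ a) where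
  continuousOn_lift := continuousOn_const
  lift_le _ _ := hle
  lift_mem_Icc _ _ := left_mem_Icc.2 le_rfl
  continuousOn := continuousOn_const
  eq_lift _ _ := rfl
  mem_range _ _ := mem_range_self a
  map_neg x hx := by simp [Subsingleton.elim x 0] at hx
  mem_image_of_isPositivePoint _ _ _ := mem_image_of_mem φ (left_mem_Icc.2 le_rfl)

/-- The filling of the interior of `Sⁿ ⊆ ℝⁿ⁺¹`, on the open cylinder over the open unit ball of
`ℝⁿ`: it follows the planned path from `A` to `ρ ∘ A ∘ (-·)` down each vertical chord. -/
noncomputable def chordFill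
    (s : Ioc (0 : ℝ) 1 × {p : Y × Y // p.1 ≤ p.2} → C(unitInterval, Y)) (ρ : Y → Y)
    (A : EuclideanSpace ℝ (Fin n) → Y) (x : EuclideanSpace ℝ (Fin (n + 1))) : Y :=
  planned s (height (initCoords x)) (A (initCoords x)) (ρ (A (-initCoords x)))
    ((1 - x (Fin.last n) / height (initCoords x)) / 2)

/-- The extension of `double σ f` to the closed unit ball of `ℝⁿ⁺¹`: `φ ∘ chordFill s ρ A` away from
the equator, and `f` on the equator, where the chords degenerate. -/
noncomputable def fill
    (s : Ioc (0 : ℝ) 1 × {p : Y × Y // p.1 ≤ p.2} → C(unitInterval, Y)) (ρ : Y → Y) (φ : Y → Z)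
    (A : EuclideanSpace ℝ (Fin n) → Y) (f : EuclideanSpace ℝ (Fin n) → Z)
    (x : EuclideanSpace ℝ (Fin (n + 1))) : Z :=
  if ‖initCoords x‖ < 1 then φ (chordFill s ρ A x) else f (initCoords x)

namespace IsLiftedHemisphere

lemma continuousOn_chordFill (hA : IsLiftedHemisphere ρ σ φ a b A f) (hs : IsLiftedMPA φ s)
    (hρ : Continuous ρ) : ContinuousOn (chordFill s ρ A) {x | ‖initCoords x‖ < 1} := by
  have hheight (x) (hx : x ∈ {x | ‖initCoords (n := n) x‖ < 1}) :
      height (initCoords x) ∈ Ioc (0 : ℝ) 1 := height_mem_Ioc hx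
  refine hs.continuousOn_planned (by fun_prop) ?_ ?_ ?_ hheight fun x hx =>
    hA.lift_le _ (mem_ball_zero_iff.2 hx)
  · exact hA.continuousOn_lift.comp (by fun_prop) fun x hx => mem_ball_zero_iff.2 hx
  · exact hρ.comp_continuousOn <| hA.continuousOn_lift.comp (by fun_prop) fun x hx => by
      simpa using hx
  · have hdiv : ContinuousOn (fun x => x (Fin.last n) / height (initCoords x))
        {x | ‖initCoords (n := n) x‖ < 1} :=
      .div (by fun_prop) (by fun_prop) fun x hx => (hheight x hx).1.ne'
    fun_prop

lemma chordFill_mem_Icc (hA : IsLiftedHemisphere ρ σ φ a b A f) (hs : IsLiftedMPA φ s)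
    (hx : ‖initCoords x‖ < 1) :
    chordFill s ρ A x ∈ Icc (A (initCoords x)) (ρ (A (-initCoords x))) :=
  hs.planned_mem_Icc _ _ (hA.lift_le _ (mem_ball_zero_iff.2 hx))

lemma fill_eq_double (hA : IsLiftedHemisphere ρ σ φ a b A f) (hs : IsLiftedMPA φ s)
    (hσσ : Function.Involutive σ) (hcomm : Function.Semiconj φ ρ σ) (hx : x ∈ sphere 0 1) :
    fill s ρ φ A f x = double σ f x := by
  have hlast := last_eq_height_or_eq_neg_height (mem_sphere_zero_iff_norm.1 hx)
  by_cases hinit : ‖initCoords x‖ < 1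
  · have hheight := height_mem_Ioc hinit
    have hball : initCoords x ∈ ball 0 1 := mem_ball_zero_iff.2 hinit
    rw [fill, if_pos hinit, chordFill]
    rcases hlast with htop | hbottom
    · have htime : (1 - x (Fin.last n) / height (initCoords x)) / 2 = 0 := by
        rw [htop, div_self hheight.1.ne', sub_self, zero_div]
      rw [htime, hs.planned_zero, double_of_nonneg (htop ▸ hheight.1.le), hA.eq_lift _ hball]
    · have htime : (1 - x (Fin.last n) / height (initCoords x)) / 2 = 1 := by
        rw [hbottom, neg_div, div_self hheight.1.ne']
        norm_num
      rw [htime, hs.planned_one hheight (hA.lift_le _ hball), hcomm.eq,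
        double_of_nonpos hσσ hA.map_neg hx (by linarith [hheight.1]),
        hA.eq_lift _ (by simpa using hball)]
  · have hnorm : ‖initCoords x‖ = 1 :=
      ((norm_initCoords_le x).trans_eq (mem_sphere_zero_iff_norm.1 hx)).antisymm (not_lt.1 hinit)
    rw [height_eq_zero hnorm, neg_zero, or_self] at hlast
    rw [fill, if_neg hinit, double_of_nonneg hlast.ge]

lemma tendsto_chordFill (hA : IsLiftedHemisphere ρ σ φ a b A f) (hs : IsLiftedMPA φ s)
    (hσ : Continuous σ) (hσσ : Function.Involutive σ) (hcomm : Function.Semiconj φ ρ σ)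
    (hx : x ∈ closedBall 0 1) (hinit : ‖initCoords x‖ = 1) :
    Tendsto (fun z => φ (chordFill s ρ A z)) (𝓝[closedBall 0 1 ∩ {z | ‖initCoords z‖ < 1}] x)
      (𝓝 (f (initCoords x))) := by
  obtain ⟨y, hy⟩ := hA.mem_range _ (mapsTo_initCoords_closedBall hx)
  have htop : Tendsto (fun z => f (initCoords z)) (𝓝[closedBall 0 1] x) (𝓝 (φ y)) := by
    rw [hy]
    exact hA.continuousOn.comp continuous_initCoords.continuousOn mapsTo_initCoords_closedBall x hx
  have hbottom : Tendsto (fun z => σ (f (-initCoords z))) (𝓝[closedBall 0 1] x) (𝓝 (φ y)) := by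
    rw [hy, ← hσσ (f (initCoords x)), ← hA.map_neg _ (mem_sphere_zero_iff_norm.2 hinit)]
    exact hσ.comp_continuousOn (hA.continuousOn.comp continuous_initCoords.neg.continuousOn
      mapsTo_neg_initCoords_closedBall) x hx
  have hheight : Tendsto (fun z => height (initCoords z)) (𝓝 x) (𝓝 0) := by
    rw [← height_eq_zero hinit]
    exact (continuous_height.comp continuous_initCoords).tendsto x
  rw [← hy]
  refine hs.tendsto_planned (hheight.mono_left nhdsWithin_le_nhds)
    ((htop.mono_left (nhdsWithin_mono _ inter_subset_left)).congr' ?_)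
    ((hbottom.mono_left (nhdsWithin_mono _ inter_subset_left)).congr' ?_)
  · filter_upwards [self_mem_nhdsWithin] with z hz
    exact hA.eq_lift _ (mem_ball_zero_iff.2 hz.2)
  · filter_upwards [self_mem_nhdsWithin] with z hz
    rw [hA.eq_lift _ (by simpa using hz.2), Function.comp_apply, hcomm.eq]

lemma continuousOn_fill (hA : IsLiftedHemisphere ρ σ φ a b A f) (hs : IsLiftedMPA φ s)
    (hρ : Continuous ρ) (hσ : Continuous σ) (hσσ : Function.Involutive σ) (hφ : Continuous φ)
    (hcomm : Function.Semiconj φ ρ σ) :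
    ContinuousOn (fill s ρ φ A f) (closedBall 0 1) := by
  have hf : ContinuousOn (fun x => f (initCoords x)) (closedBall 0 1) :=
    hA.continuousOn.comp continuous_initCoords.continuousOn mapsTo_initCoords_closedBall
  have hfrontier : frontier {x | ‖initCoords (n := n) x‖ < 1} ⊆ {x | ‖initCoords x‖ = 1} :=
    frontier_lt_subset_eq (by fun_prop) continuous_const
  refine ContinuousOn.if' ?_ ?_ ?_ (hf.mono inter_subset_left)
  · rintro x ⟨hx, hx_frontier⟩
    have hinit := hfrontier hx_frontier
    rw [if_neg hinit.not_lt]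
    exact hA.tendsto_chordFill hs hσ hσσ hcomm hx hinit
  · rintro x ⟨hx, hx_frontier⟩
    have hinit := hfrontier hx_frontier
    rw [if_neg hinit.not_lt]
    exact (hf x hx).mono inter_subset_left
  · exact hφ.comp_continuousOn ((hA.continuousOn_chordFill hs hρ).mono inter_subset_right)

lemma double_mem_image_of_isPositivePoint (hA : IsLiftedHemisphere ρ σ φ a b A f)
    (hx : x ∈ sphere 0 1) (hpos : IsPositivePoint x) : double σ f x ∈ φ '' Icc a b := by
  rw [mem_sphere_zero_iff_norm] at hx
  rw [double_of_nonneg hpos.last_nonneg]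
  by_cases hlast : x (Fin.last n) = 0
  · refine hA.mem_image_of_isPositivePoint _ ?_ (hpos.initCoords hlast)
    rw [mem_sphere_zero_iff_norm, norm_initCoords_of_last_eq_zero hlast, hx]
  · have hball : initCoords x ∈ ball 0 1 :=
      mem_ball_zero_iff.2 ((norm_initCoords_lt hlast).trans_eq hx)
    exact ⟨A (initCoords x), hA.lift_mem_Icc _ hball, (hA.eq_lift _ hball).symm⟩

lemma succ (hA : IsLiftedHemisphere ρ σ φ a b A f) (hs : IsLiftedMPA φ s)
    (hρ : Continuous ρ) (hρ_mono : Monotone ρ) (hρ_le : ∀ y, y ≤ ρ y) (hσ : Continuous σ)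
    (hσσ : Function.Involutive σ) (hφ : Continuous φ) (hcomm : Function.Semiconj φ ρ σ) :
    IsLiftedHemisphere ρ σ φ a (ρ b) (chordFill s ρ A) (fill s ρ φ A f) := by
  have hinit {x : EuclideanSpace ℝ (Fin (n + 1))} (hx : x ∈ ball 0 1) : ‖initCoords x‖ < 1 :=
    (norm_initCoords_le x).trans_lt (mem_ball_zero_iff.1 hx)
  have hneg {x : EuclideanSpace ℝ (Fin (n + 1))} (hx : x ∈ ball 0 1) : -x ∈ ball 0 1 := by
    simpa using hx
  refine
    { continuousOn_lift := (hA.continuousOn_chordFill hs hρ).mono fun x => hinit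
      lift_le := fun x hx => ?_
      lift_mem_Icc := fun x hx => ?_
      continuousOn := hA.continuousOn_fill hs hρ hσ hσσ hφ hcomm
      eq_lift := fun x hx => if_pos (hinit hx)
      mem_range := fun x hx => ?_
      map_neg := fun x hx => ?_
      mem_image_of_isPositivePoint := fun x hx hpos => ?_ }
  · calc chordFill s ρ A x ≤ ρ (A (-initCoords x)) := (hA.chordFill_mem_Icc hs (hinit hx)).2
      _ ≤ ρ (chordFill s ρ A (-x)) :=
        hρ_mono (hA.chordFill_mem_Icc hs (hinit (hneg hx))).1
  · have hfill := hA.chordFill_mem_Icc hs (hinit hx)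
    have hA_init := hA.lift_mem_Icc _ (mem_ball_zero_iff.2 (hinit hx))
    have hA_neg := hA.lift_mem_Icc _ (mem_ball_zero_iff.2 (hinit (hneg hx)))
    exact ⟨hA_init.1.trans hfill.1, hfill.2.trans (hρ_mono hA_neg.2)⟩
  · unfold fill
    split_ifs
    · exact mem_range_self _
    · exact hA.mem_range _ (mapsTo_initCoords_closedBall hx)
  · rw [hA.fill_eq_double hs hσσ hcomm hx, hA.fill_eq_double hs hσσ hcomm (by simpa using hx),
      double_neg hσσ hA.map_neg hx]
  · rw [hA.fill_eq_double hs hσσ hcomm hx]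
    exact image_mono (Icc_subset_Icc_right (hρ_le b))
      (hA.double_mem_image_of_isPositivePoint hx hpos)

end IsLiftedHemisphere

lemma exists_isLiftedHemisphere (hs : IsLiftedMPA φ s) (hρ : Continuous ρ)
    (hρ_mono : Monotone ρ) (hρ_le : ∀ y, y ≤ ρ y) (hσ : Continuous σ)
    (hσσ : Function.Involutive σ) (hφ : Continuous φ) (hcomm : Function.Semiconj φ ρ σ)
    (n : ℕ) (a : Y) :
    ∃ (A : EuclideanSpace ℝ (Fin n) → Y) (f : EuclideanSpace ℝ (Fin n) → Z),
      IsLiftedHemisphere ρ σ φ a (ρ^[n] a) A f := by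
  induction n with
  | zero => exact ⟨_, _, isLiftedHemisphere_const (hρ_le a)⟩
  | succ n ih =>
    obtain ⟨A, f, hA⟩ := ih
    rw [Function.iterate_succ_apply']
    exact ⟨_, _, hA.succ hs hρ hρ_mono hρ_le hσ hσσ hφ hcomm⟩

theorem lifted_mpa_coindex_general (hs : IsLiftedMPA φ s) (hρ : Continuous ρ)
    (hρ_mono : Monotone ρ) (hρ_le : ∀ y, y ≤ ρ y) (hσ : Continuous σ)
    (hσσ : Function.Involutive σ) (hφ : Continuous φ) (hcomm : Function.Semiconj φ ρ σ)
    (n : ℕ) (a : Y) :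
    ∃ β : EuclideanSpace ℝ (Fin (n + 1)) → Z,
      ContinuousOn β (sphere 0 1) ∧ (∀ x ∈ sphere 0 1, β (-x) = σ (β x)) ∧
      ∀ x ∈ sphere 0 1, IsPositivePoint x → ∃ y, a ≤ y ∧ y ≤ ρ^[n] a ∧ β x = φ y := by
  obtain ⟨A, f, hA⟩ := exists_isLiftedHemisphere hs hρ hρ_mono hρ_le hσ hσσ hφ hcomm n a
  refine ⟨double σ f, continuousOn_double hσ hσσ hA.map_neg hA.continuousOn,
    fun _ => double_neg hσσ hA.map_neg, fun x hx hpos => ?_⟩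
  obtain ⟨y, hy, hxy⟩ := hA.double_mem_image_of_isPositivePoint hx hpos
  exact ⟨y, hy.1, hy.2, hxy.symm⟩

end Hemispheres

/-- **Lifted motion planning algorithms give ℤ/2-maps from spheres.**
Let `ρ : Y → Y`, let `σ : Z → Z` be a continuous involution, let `φ : Y → Z` be continuous
and equivariant, let `≼` (here `r`) be a preorder on `Y`, and let
`s : (0,1] × Y²_≼ → PY` be a lifted motion planning algorithm for `(Y, Z, φ, ≼)`
compatible with `ρ` and `r` as in (1)–(3). Then for each `n ≥ 0` and each `y* ∈ Y` there
is a continuous map `βₙ : Sⁿ → Z` with `βₙ(-x) = σ(βₙ(x))`, mapping each positive point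
of `Sⁿ` to a point `φ(y)` with `y* ≼ y ≼ ρⁿ(y*)`. -/
theorem lifted_mpa_coindex {Y Z : Type*} [TopologicalSpace Y] [TopologicalSpace Z]
    (ρ : Y → Y) (σ : Z → Z) (φ : Y → Z)
    (hρ : Continuous ρ) (hσ : Continuous σ) (hσσ : σ ∘ σ = id)
    (hφ : Continuous φ) (hcomm : σ ∘ φ = φ ∘ ρ)
    (r : Y → Y → Prop) (hrefl : ∀ y, r y y)
    (htrans : ∀ a b c, r a b → r b c → r a c)
    (s : Set.Ioc (0:ℝ) 1 × {p : Y × Y // r p.1 p.2} → C(Set.Icc (0:ℝ) 1, Y))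
    (hs : Continuous s)
    (hs0 : ∀ w p, s (w, p) ⟨0, Set.left_mem_Icc.mpr zero_le_one⟩ = p.1.1)
    (hs1 : ∀ w p, s (w, p) ⟨1, Set.right_mem_Icc.mpr zero_le_one⟩ = p.1.2)
    (hlift : ∀ y : Y, ∀ V ∈ nhds (φ y), ∃ U ∈ nhds (φ y), ∃ δ > (0:ℝ),
      ∀ (w : Set.Ioc (0:ℝ) 1) (p : {p : Y × Y // r p.1 p.2}),
        φ p.1.1 ∈ U → φ p.1.2 ∈ U → (w : ℝ) < δ →
        ∀ t : Set.Icc (0:ℝ) 1, φ (s (w, p) t) ∈ V)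
    (h1 : ∀ y, r y (ρ y))
    (h2 : ∀ y₀ y₁, r (ρ y₀) (ρ y₁) ↔ r y₀ y₁)
    (h3 : ∀ (w : Set.Ioc (0:ℝ) 1) (p : {p : Y × Y // r p.1 p.2}) (t : Set.Icc (0:ℝ) 1),
      r p.1.1 (s (w, p) t) ∧ r (s (w, p) t) p.1.2)
    (n : ℕ) (ystar : Y) :
    ∃ β : EuclideanSpace ℝ (Fin (n + 1)) → Z,
      ContinuousOn β (Metric.sphere 0 1) ∧
      (∀ x ∈ Metric.sphere (0 : EuclideanSpace ℝ (Fin (n + 1))) 1, β (-x) = σ (β x)) ∧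
      (∀ x ∈ Metric.sphere (0 : EuclideanSpace ℝ (Fin (n + 1))) 1, IsPositivePoint x →
        ∃ y : Y, r ystar y ∧ r y (ρ^[n] ystar) ∧ β x = φ y) := by
  let _ : Preorder Y := { le := r, le_refl := hrefl, le_trans := htrans }
  exact lifted_mpa_coindex_general (s := s) ⟨hs, hs0, hs1, hlift, h3⟩ hρ
    (fun y₀ y₁ => (h2 y₀ y₁).2) h1 hσ (congrFun hσσ) hφ (fun y => (congrFun hcomm y).symm) n ystar
end

section
/- Let τ : ℝ → [0,1] be a smooth nondecreasing function with τ(x) = 0 for x ≤ −1 and τ(x) = 1 for x ≥ 1. Let g, g_0, g_1 : [0,1] → ℝ be smooth nondecreasing functions with g_0 ≤ g_1 pointwise, let w ∈ (0,1], t ∈ [0,1], and define G(x) = (1 − τ((x − (1 − t))/w)) · g_0(x) + τ((x − (1 − t))/w) · g_1(x). Then ∫_0^1 |e^{iG(x)} − e^{ig(x)}| dx ≤ ∫_0^1 |e^{ig_0(x)} − e^{ig(x)}| dx + ∫_0^1 |e^{ig_1(x)} − e^{ig(x)}| dx + 4w. -/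
/-!
Off the window `[1 - t - w, 1 - t + w]` the function `G` coincides with `g₀` or with `g₁`, so there
the integrand on the left is one of the two integrands on the right. On the window, of length `2w`,
it is at most `2`, the diameter of the unit circle; this produces the error term `4w`.
-/

open MeasureTheory Set

theorem integral_le_integral_add_mul_measureReal {α : Type*} [MeasurableSpace α] {μ : Measure α}
    {f h : α → ℝ} {s : Set α} {C : ℝ} (hf : Integrable f μ) (hh : Integrable h μ)
    (hh_nonneg : ∀ x, 0 ≤ h x) (hs : MeasurableSet s) (hμs : μ s ≠ ⊤)
    (hf_on : ∀ x ∈ s, f x ≤ C) (hf_off : ∀ x ∉ s, f x ≤ h x) :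
    ∫ x, f x ∂μ ≤ ∫ x, h x ∂μ + C * μ.real s := by
  have hC : Integrable (s.indicator fun _ => C) μ :=
    (integrable_indicator_iff hs).2 (integrableOn_const hμs)
  have hf_le : ∀ x, f x ≤ h x + s.indicator (fun _ => C) x := fun x => by
    by_cases hx : x ∈ s
    · simpa [hx] using add_le_add (hh_nonneg x) (hf_on x hx)
    · simpa [hx] using hf_off x hx
  calc ∫ x, f x ∂μ ≤ ∫ x, h x + s.indicator (fun _ => C) x ∂μ :=
        integral_mono hf (hh.add hC) hf_le
    _ = ∫ x, h x ∂μ + C * μ.real s := by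
        rw [integral_add hh hC, integral_indicator_const C hs, smul_eq_mul, mul_comm]

/-- The distance in `ℂ` between the points of the unit circle at angles `a` and `b`. -/
noncomputable def chordDist (a b : ℝ) : ℝ :=
  ‖Complex.exp (Complex.I * (a : ℂ)) - Complex.exp (Complex.I * (b : ℂ))‖

theorem chordDist_nonneg (a b : ℝ) : 0 ≤ chordDist a b :=
  norm_nonneg _

theorem chordDist_le_two (a b : ℝ) : chordDist a b ≤ 2 :=
  calc chordDist a b
      ≤ ‖Complex.exp (Complex.I * (a : ℂ))‖ + ‖Complex.exp (Complex.I * (b : ℂ))‖ :=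
        norm_sub_le _ _
    _ = 2 := by
        rw [Complex.norm_exp_I_mul_ofReal, Complex.norm_exp_I_mul_ofReal, one_add_one_eq_two]

theorem continuous_chordDist : Continuous fun p : ℝ × ℝ => chordDist p.1 p.2 := by
  unfold chordDist
  fun_prop

theorem integrable_chordDist {α : Type*} [MeasurableSpace α] {μ : Measure α} [IsFiniteMeasure μ]
    {f g : α → ℝ} (hf : AEMeasurable f μ) (hg : AEMeasurable g μ) :
    Integrable (fun x => chordDist (f x) (g x)) μ := by
  refine .of_bound (continuous_chordDist.measurable.comp_aemeasurable
    (hf.prodMk hg)).aestronglyMeasurable 2 (.of_forall fun x => ?_)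
  rw [Real.norm_of_nonneg (chordDist_nonneg _ _)]
  exact chordDist_le_two _ _

/-- The function passing from `g₀` to `g₁` across the window of half-width `w` around `c`, with
the profile `τ` rescaled from `[-1, 1]` to that window. -/
noncomputable def transition (τ : ℝ → ℝ) (c w : ℝ) (g₀ g₁ : ℝ → ℝ) (x : ℝ) : ℝ :=
  (1 - τ ((x - c) / w)) * g₀ x + τ ((x - c) / w) * g₁ x

section Transition

variable {τ g g₀ g₁ : ℝ → ℝ} {c w x : ℝ} {μ : Measure ℝ}

theorem transition_of_le (hτ0 : ∀ y ≤ -1, τ y = 0) (hw : 0 < w) (hx : x ≤ c - w) :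
    transition τ c w g₀ g₁ x = g₀ x := by
  have hτx : τ ((x - c) / w) = 0 := hτ0 _ (by rw [div_le_iff₀ hw]; linarith)
  simp [transition, hτx]

theorem transition_of_ge (hτ1 : ∀ y, 1 ≤ y → τ y = 1) (hw : 0 < w) (hx : c + w ≤ x) :
    transition τ c w g₀ g₁ x = g₁ x := by
  have hτx : τ ((x - c) / w) = 1 := hτ1 _ (by rw [le_div_iff₀ hw]; linarith)
  simp [transition, hτx]

theorem chordDist_transition_le_add (hτ0 : ∀ y ≤ -1, τ y = 0) (hτ1 : ∀ y, 1 ≤ y → τ y = 1)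
    (hw : 0 < w) (hx : x ∉ Icc (c - w) (c + w)) (b : ℝ) :
    chordDist (transition τ c w g₀ g₁ x) b ≤ chordDist (g₀ x) b + chordDist (g₁ x) b := by
  rcases le_total x (c - w) with hleft | hge
  · rw [transition_of_le hτ0 hw hleft]
    exact le_add_of_nonneg_right (chordDist_nonneg _ _)
  · have hright : c + w ≤ x := le_of_not_ge fun h => hx ⟨hge, h⟩
    rw [transition_of_ge hτ1 hw hright]
    exact le_add_of_nonneg_left (chordDist_nonneg _ _)

theorem aemeasurable_transition (hτ : Measurable τ) (hg₀ : AEMeasurable g₀ μ)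
    (hg₁ : AEMeasurable g₁ μ) : AEMeasurable (transition τ c w g₀ g₁) μ := by
  have hτ_scaled : Measurable fun x => τ ((x - c) / w) := hτ.comp (by fun_prop)
  exact ((hτ_scaled.const_sub 1).aemeasurable.mul hg₀).add (hτ_scaled.aemeasurable.mul hg₁)

theorem integral_chordDist_transition_le [IsFiniteMeasure μ] (hτ : Measurable τ)
    (hτ0 : ∀ y ≤ -1, τ y = 0) (hτ1 : ∀ y, 1 ≤ y → τ y = 1) (hg : AEMeasurable g μ)
    (hg₀ : AEMeasurable g₀ μ) (hg₁ : AEMeasurable g₁ μ) (hw : 0 < w) :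
    ∫ x, chordDist (transition τ c w g₀ g₁ x) (g x) ∂μ ≤
      ∫ x, chordDist (g₀ x) (g x) ∂μ + ∫ x, chordDist (g₁ x) (g x) ∂μ +
        2 * μ.real (Icc (c - w) (c + w)) := by
  have hint₀ := integrable_chordDist hg₀ hg
  have hint₁ := integrable_chordDist hg₁ hg
  rw [← integral_add hint₀ hint₁]
  exact integral_le_integral_add_mul_measureReal
    (integrable_chordDist (aemeasurable_transition hτ hg₀ hg₁) hg) (hint₀.add hint₁)
    (fun _ => add_nonneg (chordDist_nonneg _ _) (chordDist_nonneg _ _)) measurableSet_Icc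
    (measure_ne_top _ _) (fun _ _ => chordDist_le_two _ _)
    (fun x hx => chordDist_transition_le_add hτ0 hτ1 hw hx (g x))

theorem transition_L1_estimate_general {a b : ℝ} (hab : a ≤ b) (hτ : Measurable τ)
    (hτ0 : ∀ y ≤ -1, τ y = 0) (hτ1 : ∀ y, 1 ≤ y → τ y = 1)
    (hg : AEMeasurable g (volume.restrict (Icc a b)))
    (hg₀ : AEMeasurable g₀ (volume.restrict (Icc a b)))
    (hg₁ : AEMeasurable g₁ (volume.restrict (Icc a b))) (hw : 0 < w) :
    ∫ x in a..b, chordDist (transition τ c w g₀ g₁ x) (g x) ≤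
      (∫ x in a..b, chordDist (g₀ x) (g x)) + (∫ x in a..b, chordDist (g₁ x) (g x)) + 4 * w := by
  have hwindow : (volume.restrict (Icc a b)).real (Icc (c - w) (c + w)) ≤ 2 * w :=
    calc (volume.restrict (Icc a b)).real (Icc (c - w) (c + w))
        ≤ volume.real (Icc (c - w) (c + w)) :=
          ENNReal.toReal_mono measure_Icc_lt_top.ne (Measure.restrict_apply_le _ _)
      _ = 2 * w := by rw [Real.volume_real_Icc_of_le (by linarith)]; ring
  simp only [intervalIntegral.integral_of_le hab, ← integral_Icc_eq_integral_Ioc]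
  linarith [integral_chordDist_transition_le (c := c) hτ hτ0 hτ1 hg hg₀ hg₁ hw]

end Transition

/-- The continuity estimate for the lifted mpa: for the transition function
`G = (1 - τ((x - (1-t))/w)) g₀ + τ((x - (1-t))/w) g₁`, one has
`∫₀¹ |e^{iG} - e^{ig}| ≤ ∫₀¹ |e^{ig₀} - e^{ig}| + ∫₀¹ |e^{ig₁} - e^{ig}| + 4w`. -/
theorem transition_L1_estimate
    (τ : ℝ → ℝ) (hτ_smooth : ContDiff ℝ (⊤ : ℕ∞) τ) (hτ_mono : Monotone τ)
    (hτ_range : ∀ x, τ x ∈ Set.Icc (0:ℝ) 1)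
    (hτ0 : ∀ x ≤ (-1:ℝ), τ x = 0) (hτ1 : ∀ x, (1:ℝ) ≤ x → τ x = 1)
    (g g₀ g₁ : ℝ → ℝ)
    (hg_smooth : ContDiffOn ℝ (⊤ : ℕ∞) g (Set.Icc 0 1))
    (hg₀_smooth : ContDiffOn ℝ (⊤ : ℕ∞) g₀ (Set.Icc 0 1))
    (hg₁_smooth : ContDiffOn ℝ (⊤ : ℕ∞) g₁ (Set.Icc 0 1))
    (hg_mono : MonotoneOn g (Set.Icc 0 1))
    (hg₀_mono : MonotoneOn g₀ (Set.Icc 0 1)) (hg₁_mono : MonotoneOn g₁ (Set.Icc 0 1))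
    (hle : ∀ x ∈ Set.Icc (0:ℝ) 1, g₀ x ≤ g₁ x)
    (w t : ℝ) (hw : w ∈ Set.Ioc (0:ℝ) 1) (ht : t ∈ Set.Icc (0:ℝ) 1)
    (G : ℝ → ℝ)
    (hG : G = fun x => (1 - τ ((x - (1 - t)) / w)) * g₀ x + τ ((x - (1 - t)) / w) * g₁ x) :
    (∫ x in (0:ℝ)..1, ‖Complex.exp (Complex.I * (G x : ℂ)) -
        Complex.exp (Complex.I * (g x : ℂ))‖) ≤
      (∫ x in (0:ℝ)..1, ‖Complex.exp (Complex.I * (g₀ x : ℂ)) -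
        Complex.exp (Complex.I * (g x : ℂ))‖) +
      (∫ x in (0:ℝ)..1, ‖Complex.exp (Complex.I * (g₁ x : ℂ)) -
        Complex.exp (Complex.I * (g x : ℂ))‖) + 4 * w :=
  hG ▸ transition_L1_estimate_general zero_le_one hτ_smooth.continuous.measurable hτ0 hτ1
    (hg_smooth.continuousOn.aemeasurable measurableSet_Icc)
    (hg₀_smooth.continuousOn.aemeasurable measurableSet_Icc)
    (hg₁_smooth.continuousOn.aemeasurable measurableSet_Icc) hw.1
end
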